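/- arXiv:math/0510011 — 6 statements merged into one kernel-verified Lean document; each statement's English description precedes it below -/
import Mathlib

section
/- Let K be a field, d ≥ 1 an integer, E a finite set, and for each e ∈ E let M_e be a d×d matrix over K of rank at most 1. Let Ψ := det(∑_{e∈E} A_e · M_e), the determinant of the matrix over the multivariate polynomial ring K[A_e : e ∈ E] whose (i,j)-entry is ∑_{e∈E} A_e · (M_e)_{ij}. Then for every e ∈ E, the degree of Ψ in the variable A_e is at most 1. -/
/-!
The degree of `Ψ` in `A_e` is in fact at most the rank of `M e`. Multiplying every `M f` on the left
by one invertible matrix `V` only multiplies `Ψ` by the nonzero constant `det V`, and `V` can be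
chosen so that `V * M e` has only `rank (M e)` nonzero rows. The variable `A_e` then occurs only in
those rows, and linearly, so each Leibniz term has degree at most `rank (M e)` in it.
-/

open MvPolynomial

section Matrix

variable {R K n σ : Type*} [Fintype n] [DecidableEq n]

theorem degreeOf_det_le_sum [CommRing R] (e : σ) (A : Matrix n n (MvPolynomial σ R)) (b : n → ℕ)
    (degreeOf_le : ∀ i j, degreeOf e (A i j) ≤ b i) : degreeOf e A.det ≤ ∑ i, b i := by
  rw [Matrix.det_apply]
  refine (degreeOf_sum_le _ _ _).trans (Finset.sup_le fun τ _ => ?_)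
  calc degreeOf e (Equiv.Perm.sign τ • ∏ i, A (τ i) i)
      = degreeOf e (∏ i, A (τ i) i) := by
        rcases Int.units_eq_one_or (Equiv.Perm.sign τ) with hτ | hτ <;> simp [hτ, degreeOf_neg]
    _ ≤ ∑ i, degreeOf e (A (τ i) i) := degreeOf_prod_le _ _ _
    _ ≤ ∑ i, b (τ i) := Finset.sum_le_sum fun i _ => degreeOf_le (τ i) i
    _ = ∑ i, b i := Equiv.sum_comp τ b

theorem exists_isUnit_mul_row_eq_zero [Field K] (M : Matrix n n K) :
    ∃ (V : Matrix n n K) (s : Finset n),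
      IsUnit V ∧ s.card = M.rank ∧ ∀ i ∉ s, (V * M) i = 0 := by
  obtain ⟨V, U, φ, hV, hU, normal_form⟩ := M.exists_rank_normal_form
  refine ⟨V, Finset.univ.map (Function.Embedding.inl.trans φ.symm.toEmbedding), hV, by simp,
    fun i hi => ?_⟩
  obtain ⟨k, hk⟩ : ∃ k, φ i = Sum.inr k := by
    rcases hφ : φ i with k | k
    · exact absurd (Finset.mem_map.2 ⟨k, Finset.mem_univ k, by simp [← hφ]⟩) hi
    · exact ⟨k, rfl⟩
  have row_mul_U : Matrix.vecMul ((V * M) i) U = 0 := by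
    ext j
    change (V * M * U) i j = 0
    rw [normal_form, Matrix.submatrix_apply, hk]
    rcases φ j with l | l <;> rfl
  exact Matrix.vecMul_injective_of_isUnit hU (by simpa using row_mul_U)

end Matrix

section ConfigMatrix

variable {R K l m n E : Type*} [Fintype E]

/-- The matrix `∑ f, A_f • M f` over `R[A_f : f ∈ E]` whose determinant is the configuration
polynomial of the family `M`; the variable `A_f` is `MvPolynomial.X f`. -/
noncomputable def configMatrix [CommSemiring R] (M : E → Matrix m n R) :
    Matrix m n (MvPolynomial E R) :=
  Matrix.of fun i j => ∑ f, X f * C (M f i j)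

theorem map_C_mul_configMatrix [CommSemiring R] [Fintype m] (V : Matrix l m R)
    (M : E → Matrix m n R) :
    V.map (C : R →+* MvPolynomial E R) * configMatrix M = configMatrix fun f => V * M f := by
  ext1 i j
  simp only [configMatrix, Matrix.mul_apply, Matrix.map_apply, Matrix.of_apply, map_sum, map_mul,
    Finset.mul_sum]
  rw [Finset.sum_comm]
  simp only [mul_left_comm]

theorem degreeOf_configMatrix_apply_le_one [CommSemiring R]
    (M : E → Matrix m n R) (e : E) (i : m) (j : n) : degreeOf e (configMatrix M i j) ≤ 1 := by
  classical
  nontriviality R using Subsingleton.elim (configMatrix M i j) 0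
  refine (degreeOf_sum_le _ _ _).trans (Finset.sup_le fun f _ => ?_)
  refine (degreeOf_mul_C_le _ _ _).trans ?_
  rw [degreeOf_X]
  split_ifs <;> simp

theorem degreeOf_configMatrix_apply_eq_zero [CommSemiring R]
    {M : E → Matrix m n R} {e : E} {i : m} {j : n} (entry_eq_zero : M e i j = 0) :
    degreeOf e (configMatrix M i j) = 0 := by
  refine Nat.le_zero.1 ((degreeOf_sum_le _ _ _).trans (Finset.sup_le fun f _ => ?_))
  obtain rfl | hef := eq_or_ne e f
  · simp [entry_eq_zero]
  · exact (degreeOf_mul_C_le _ _ _).trans (degreeOf_X_of_ne hef).le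

variable [Fintype n] [DecidableEq n]

theorem det_configMatrix_mul_left [CommRing R] (V : Matrix n n R) (M : E → Matrix n n R) :
    (configMatrix fun f => V * M f).det = C V.det * (configMatrix M).det := by
  rw [← map_C_mul_configMatrix, Matrix.det_mul, RingHom.map_det, RingHom.mapMatrix_apply]

theorem degreeOf_det_configMatrix_le_card [CommRing R] (M : E → Matrix n n R) (e : E)
    (s : Finset n) (row_eq_zero : ∀ i ∉ s, M e i = 0) :
    degreeOf e (configMatrix M).det ≤ s.card := by
  calc degreeOf e (configMatrix M).det
      ≤ ∑ i, if i ∈ s then 1 else 0 := degreeOf_det_le_sum e _ _ fun i j => by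
        split_ifs with hi
        · exact degreeOf_configMatrix_apply_le_one M e i j
        · exact (degreeOf_configMatrix_apply_eq_zero (congrFun (row_eq_zero i hi) j)).le
    _ = s.card := by simp

theorem degreeOf_config_poly_le_one_general [Field K] (M : E → Matrix n n K) (e : E) :
    degreeOf e (configMatrix M).det ≤ (M e).rank := by
  obtain ⟨V, s, hV, card_eq_rank, row_eq_zero⟩ := exists_isUnit_mul_row_eq_zero (M e)
  have det_V_ne_zero : V.det ≠ 0 := (V.isUnit_iff_isUnit_det.1 hV).ne_zero
  calc degreeOf e (configMatrix M).det
      = degreeOf e (configMatrix fun f => V * M f).det := by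
        rw [det_configMatrix_mul_left,
          degreeOf_C_mul _ _ (mem_nonZeroDivisors_of_ne_zero det_V_ne_zero)]
    _ ≤ s.card := degreeOf_det_configMatrix_le_card _ e s row_eq_zero
    _ = (M e).rank := card_eq_rank

end ConfigMatrix

/-- **Configuration polynomials have degree ≤ 1 in each variable.**
Let `K` be a field, `d ≥ 1`, `E` a finite set, and for each `e ∈ E` let `M e` be a
`d × d` matrix over `K` of rank at most `1`.  Let `Ψ := det (∑ e, A_e • M e)`, a
polynomial in the multivariate polynomial ring `K[A_e : e ∈ E]`.  Then for every
`e ∈ E` the degree of `Ψ` in the variable `A_e` is at most `1`. -/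
theorem degreeOf_config_poly_le_one
    {K : Type} [Field K] {E : Type} [Fintype E]
    (d : ℕ) (hd : 1 ≤ d)
    (M : E → Matrix (Fin d) (Fin d) K)
    (hM : ∀ e : E, (M e).rank ≤ 1) (e : E) :
    MvPolynomial.degreeOf e
      (Matrix.det (Matrix.of fun i j : Fin d =>
        ∑ f : E, MvPolynomial.X f * MvPolynomial.C (M f i j))) ≤ 1 :=
  (degreeOf_config_poly_le_one_general M e).trans (hM e)
end

section
/- Let R be a commutative ring, d ≥ 1 an integer, E a finite linearly ordered set, and for each e ∈ E a vector a_e ∈ R^d; let M_e := a_e·a_eᵀ be the d×d matrix with (i,j)-entry (a_e)_i·(a_e)_j. Then in the multivariate polynomial ring R[A_e : e ∈ E] one has det(∑_{e∈E} A_e · M_e) = ∑_{S ⊆ E, #S = d} (∏_{e∈S} A_e) · (det N_S)², where for each d-element subset S ⊆ E, N_S denotes the d×d matrix whose rows are the vectors a_e for e ∈ S listed in increasing order. In particular, for each S with #S = d the coefficient of the monomial ∏_{e∈S} A_e equals det(N_S)², and all other coefficients vanish. -/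
/-!
With `B` the matrix whose rows are the vectors `a e`, the matrix `∑ e, A_e • M_e` is
`Bᵀ * diagonal A * B`. The theorem is therefore the Cauchy–Binet formula for the factors
`Bᵀ * diagonal A` and `B`: on a `d`-element set `S` of indices, the minor of the first factor is
`∏ e ∈ S, A_e` times the minor `det N_S` of the second.

For the Cauchy–Binet formula itself, expand `det (P * Q)` multilinearly in the rows into a sum over
all functions `p` from rows to indices. Only injective `p` contribute; each is uniquely an
enumeration of its range `S` composed with a permutation, and the permutations assemble the Leibniz
expansion of the minor of `P` on `S`.
-/

open Equiv Function Matrix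

theorem sum_powersetCard_eq_sum_dite {α M : Type*} [Fintype α] [AddCommMonoid M] {d : ℕ}
    (g : Set.powersetCard α d → M) :
    ∑ S, g S = ∑ S : Finset α, if h : S.card = d then g ⟨S, h⟩ else 0 := by
  refine Fintype.sum_of_injective Subtype.val Subtype.val_injective _ _ (fun S hS => ?_) fun S => ?_
  · exact dif_neg fun h => hS ⟨⟨S, h⟩, rfl⟩
  · rw [dif_pos (Set.powersetCard.card_eq S)]

section Enumeration

variable {m n : Type*} {d : ℕ} (e : ∀ S : Set.powersetCard m d, n ≃ S)

theorem injective_enumeration_comp_perm :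
    Injective fun (q : Set.powersetCard m d × Perm n) (i : n) => (e q.1 (q.2 i) : m) := by
  rintro ⟨S, σ⟩ ⟨T, τ⟩ h
  have range_eq (U : Set.powersetCard m d) (ρ : Perm n) :
      Set.range (fun i => (e U (ρ i) : m)) = U := by
    rw [← Subtype.range_coe (s := (U : Set m))]
    exact (ρ.trans (e U)).surjective.range_comp Subtype.val
  obtain rfl : S = T := SetLike.coe_injective <| by
    rw [← range_eq S σ, ← range_eq T τ]
    exact congrArg Set.range h
  have perm_eq : σ = τ := Equiv.ext fun i => (e S).injective (Subtype.ext (congrFun h i))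
  rw [perm_eq]

theorem exists_eq_enumeration_comp_perm [Fintype n] (hn : Fintype.card n = d)
    {p : n → m} (hp : Injective p) :
    ∃ (S : Set.powersetCard m d) (σ : Perm n), p = fun i => (e S (σ i) : m) := by
  let S : Set.powersetCard m d := ⟨Finset.univ.map ⟨p, hp⟩, by simp [Set.powersetCard, hn]⟩
  have p_mem (i : n) : p i ∈ S := Finset.mem_map_of_mem ⟨p, hp⟩ (Finset.mem_univ i)
  have index_injective : Injective fun i => (e S).symm ⟨p i, p_mem i⟩ := fun i j h =>
    hp (congrArg Subtype.val ((e S).symm.injective h))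
  exact ⟨S, .ofBijective _ (Finite.injective_iff_bijective.mp index_injective), by simp⟩

end Enumeration

section CauchyBinet

variable {R m n : Type*} [CommRing R] [Fintype n] [DecidableEq n]

theorem det_mul_eq_sum_prod_mul_det_submatrix [Fintype m] (A : Matrix n m R) (B : Matrix m n R) :
    (A * B).det = ∑ p : n → m, (∏ i, A i (p i)) * (B.submatrix p id).det := by
  have rows_eq : A * B = fun i => ∑ k, A i k • B k := by
    ext i j
    simp [mul_apply]
  calc (A * B).det
      = detRowAlternating (fun i => ∑ k, A i k • B k) := by rw [rows_eq]; rfl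
    _ = ∑ p : n → m, detRowAlternating fun i => A i (p i) • B (p i) :=
        detRowAlternating.toMultilinearMap.map_sum fun i k => A i k • B k
    _ = ∑ p : n → m, (∏ i, A i (p i)) * (B.submatrix p id).det :=
        Finset.sum_congr rfl fun p _ =>
          detRowAlternating.toMultilinearMap.map_smul_univ (fun i => A i (p i)) fun i => B (p i)

theorem det_submatrix_id_eq_zero_of_not_injective (B : Matrix m n R) {p : n → m}
    (hp : ¬ Injective p) : (B.submatrix p id).det = 0 := by
  obtain ⟨i, j, p_eq, i_ne_j⟩ := not_injective_iff.mp hp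
  exact det_zero_of_row_eq i_ne_j (congrArg B p_eq)

theorem sum_perm_prod_mul_det_submatrix (A : Matrix n m R) (B : Matrix m n R) (f : n → m) :
    ∑ σ : Perm n, (∏ i, A i (f (σ i))) * (B.submatrix (f ∘ σ) id).det =
      (A.submatrix id f).det * (B.submatrix f id).det := by
  rw [← det_transpose (A.submatrix id f), det_apply', Finset.sum_mul]
  refine Finset.sum_congr rfl fun σ _ => ?_
  have det_comp_perm :
      (B.submatrix (f ∘ σ) id).det = (Perm.sign σ : ℤ) * (B.submatrix f id).det :=
    det_permute σ (B.submatrix f id)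
  simp only [det_comp_perm, transpose_apply, submatrix_apply, id_eq]
  ring

variable [Fintype m] {d : ℕ} (e : ∀ S : Set.powersetCard m d, n ≃ S)

theorem det_mul_eq_sum_powersetCard (hn : Fintype.card n = d)
    (A : Matrix n m R) (B : Matrix m n R) :
    (A * B).det = ∑ S : Set.powersetCard m d,
      (A.submatrix id fun i => (e S i : m)).det * (B.submatrix (fun i => (e S i : m)) id).det := by
  have term_eq_zero (p : n → m)
      (hp : p ∉ Set.range fun (q : Set.powersetCard m d × Perm n) i => (e q.1 (q.2 i) : m)) :
      (∏ i, A i (p i)) * (B.submatrix p id).det = 0 := by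
    rw [det_submatrix_id_eq_zero_of_not_injective, mul_zero]
    intro p_injective
    obtain ⟨S, σ, rfl⟩ := exists_eq_enumeration_comp_perm e hn p_injective
    exact hp ⟨(S, σ), rfl⟩
  simp_rw [← sum_perm_prod_mul_det_submatrix]
  rw [det_mul_eq_sum_prod_mul_det_submatrix, ← Fintype.sum_prod_type']
  exact (Fintype.sum_of_injective _ (injective_enumeration_comp_perm e) _ _ term_eq_zero
    fun _ => rfl).symm

theorem det_transpose_mul_diagonal_mul_eq_sum_powersetCard [DecidableEq m]
    (hn : Fintype.card n = d) (x : m → R) (B : Matrix m n R) :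
    (Bᵀ * diagonal x * B).det = ∑ S : Set.powersetCard m d,
      (∏ k ∈ (S : Finset m), x k) * (B.submatrix (fun i => (e S i : m)) id).det ^ 2 := by
  rw [det_mul_eq_sum_powersetCard e hn]
  refine Finset.sum_congr rfl fun S _ => ?_
  set f : n → m := fun i => e S i
  have submatrix_eq :
      (Bᵀ * diagonal x).submatrix id f = (B.submatrix f id)ᵀ * diagonal (x ∘ f) := by
    ext i j
    simp [mul_diagonal]
  have prod_eq : ∏ i, x (f i) = ∏ k ∈ (S : Finset m), x k :=
    ((e S).prod_comp fun k => x k).trans (Finset.prod_coe_sort (S : Finset m) x)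
  rw [submatrix_eq, det_mul, det_transpose, det_diagonal]
  simp only [Function.comp_apply, prod_eq]
  ring

end CauchyBinet

theorem transpose_mul_diagonal_mul_apply {R m n : Type*} [CommSemiring R] [Fintype m]
    [DecidableEq m] (x : m → R) (B : Matrix m n R) (i j : n) :
    (Bᵀ * diagonal x * B) i j = ∑ k, x k * (B k i * B k j) := by
  simp only [mul_apply (M := Bᵀ * diagonal x), mul_diagonal, transpose_apply]
  exact Finset.sum_congr rfl fun k _ => by ring

/-- **Expansion of a configuration determinant in terms of Plücker coordinates.**
Let `R` be a commutative ring, `d ≥ 1`, `E` a finite linearly ordered set and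
`a e ∈ R^d` a vector for each `e ∈ E`; let `M_e := a_e·a_eᵀ` be the outer-product
matrix.  Then in `R[A_e : e ∈ E]`,
`det (∑ e, A_e · M_e) = ∑_{S ⊆ E, #S = d} (∏_{e ∈ S} A_e) · (det N_S)²`,
where `N_S` has rows `a e`, `e ∈ S`, listed in increasing order. -/
theorem det_config_eq_sum_squares
    {R : Type} [CommRing R] {E : Type} [Fintype E] [LinearOrder E]
    (d : ℕ) (hd : 1 ≤ d) (a : E → Fin d → R) :
    Matrix.det (Matrix.of fun i j : Fin d =>
        ∑ e : E, MvPolynomial.X e * MvPolynomial.C (a e i * a e j)) =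
    ∑ S : Finset E,
      if h : S.card = d then
        (∏ e ∈ S, MvPolynomial.X e) *
          MvPolynomial.C
            (Matrix.det (Matrix.of fun i j : Fin d => a ((S.orderIsoOfFin h) i) j) ^ 2)
      else 0 := by
  let N : Matrix E (Fin d) (MvPolynomial E R) := (of a).map MvPolynomial.C
  have config_eq : (of fun i j : Fin d =>
      ∑ e : E, MvPolynomial.X e * MvPolynomial.C (a e i * a e j)) =
        Nᵀ * diagonal (MvPolynomial.X : E → MvPolynomial E R) * N := by
    ext1 i j
    simp only [transpose_mul_diagonal_mul_apply, N, of_apply, map_apply, map_mul]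
  rw [config_eq, det_transpose_mul_diagonal_mul_eq_sum_powersetCard
    (fun S => (Set.powersetCard.orderIsoOfFin S).toEquiv) (Fintype.card_fin d),
    sum_powersetCard_eq_sum_dite]
  refine Finset.sum_congr rfl fun S _ => ?_
  split_ifs with h
  · rw [map_pow, RingHom.map_det]
    rfl
  · rfl
end

section
/- Let K be a field, E a finite linearly ordered set with N := #E, and let 0 < d < N. Let P be a d×N matrix over K of rank d and Q an (N−d)×N matrix over K of rank N−d, with columns of both indexed by E, such that P·Qᵀ = 0. Then there exists c ∈ K with c ≠ 0 such that for every subset S ⊆ E with #S = d one has det(P_S)² = c · det(Q_{E∖S})², where P_S is the d×d submatrix of P formed by the columns in S (listed in increasing order) and Q_{E∖S} is the (N−d)×(N−d) submatrix of Q formed by the columns in E∖S. Equivalently, det(P·diag(A)·Pᵀ) = c · ∑_{S ⊆ E, #S = d} (∏_{e∈S} A_e) · det(Q_{E∖S})² as elements of the polynomial ring K[A_e : e ∈ E], where diag(A) is the N×N diagonal matrix with diagonal entries A_e. -/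
open Matrix

/-!
Complete `P` to a square matrix `M` by adding rows dual to those of `Q`. Since `P * Qᵀ = 0`, the
inverse of `M` has the form `[N | Qᵀ]`, so Jacobi's identity for complementary minors says that the
minor of `P` on `S` is, up to sign, `det M` times the minor of `Q` on `Sᶜ`. Squaring removes the
sign, so `c = (det M)²` works for every `S`. The Cauchy–Binet formula expands
`det (P * diag(A) * Pᵀ)` into the squared minors of `P`, which turns the identities between minors
into the polynomial identity.
-/

open Finset

theorem range_eq_range_iff_exists_perm {n E : Type*} [Finite n] {f g : n → E}
    (hg : Function.Injective g) : Set.range f = Set.range g ↔ ∃ σ : Equiv.Perm n, g ∘ σ = f := by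
  constructor
  · intro h
    choose σ hσ using fun i ↦ (h ▸ Set.mem_range_self i : f i ∈ Set.range g)
    have hσ_surj : Function.Surjective σ := fun j ↦ by
      obtain ⟨i, hi⟩ : g j ∈ Set.range f := h ▸ Set.mem_range_self j
      exact ⟨i, hg ((hσ i).trans hi)⟩
    exact ⟨Equiv.ofBijective σ (Finite.surjective_iff_bijective.1 hσ_surj), funext hσ⟩
  · rintro ⟨σ, rfl⟩
    exact σ.surjective.range_comp g

section CauchyBinet

variable {R E n : Type*} [CommRing R] [Fintype n] [DecidableEq n]

theorem det_mul_eq_sum_det_submatrix_mul_prod [Fintype E]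
    (A : Matrix n E R) (B : Matrix E n R) :
    (A * B).det = ∑ f : n → E, (A.submatrix id f).det * ∏ i, B (f i) i := by
  classical
  simp only [det_apply', mul_apply, prod_univ_sum, Fintype.piFinset_univ, mul_sum, sum_mul,
    prod_mul_distrib, submatrix_apply, id]
  rw [sum_comm]
  simp only [mul_assoc]

theorem det_submatrix_eq_zero_of_not_injective (A : Matrix n E R) {f : n → E}
    (hf : ¬ Function.Injective f) : (A.submatrix id f).det = 0 := by
  obtain ⟨i, j, hij, hne⟩ := Function.not_injective_iff.1 hf
  exact det_zero_of_column_eq hne fun k ↦ by simp only [submatrix_apply, hij]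

theorem sum_perm_det_submatrix_comp_mul_prod (A : Matrix n E R) (B : Matrix E n R) (g : n → E) :
    ∑ σ : Equiv.Perm n, (A.submatrix id (g ∘ σ)).det * ∏ i, B (g (σ i)) i =
      (A.submatrix id g).det * (B.submatrix g id).det := by
  rw [det_apply' (B.submatrix g id), mul_sum]
  refine sum_congr rfl fun σ _ ↦ ?_
  have det_perm : (A.submatrix id (g ∘ σ)).det = Equiv.Perm.sign σ * (A.submatrix id g).det :=
    det_permute' σ (A.submatrix id g)
  simp only [det_perm, submatrix_apply, id]
  ring

theorem sum_image_eq_image_det_submatrix_mul_prod [Fintype E] [DecidableEq E]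
    (A : Matrix n E R) (B : Matrix E n R) {g : n → E} (hg : Function.Injective g) :
    ∑ f : n → E with univ.image f = univ.image g, (A.submatrix id f).det * ∏ i, B (f i) i =
      (A.submatrix id g).det * (B.submatrix g id).det := by
  have fiber_eq : ({f : n → E | univ.image f = univ.image g} : Finset (n → E)) =
      univ.image fun σ : Equiv.Perm n ↦ g ∘ σ := by
    ext f
    simp [← coe_inj, range_eq_range_iff_exists_perm hg]
  have comp_injective : Function.Injective fun σ : Equiv.Perm n ↦ g ∘ σ :=
    hg.comp_left.comp DFunLike.coe_injective
  rw [fiber_eq, sum_image comp_injective.injOn]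
  exact sum_perm_det_submatrix_comp_mul_prod A B g

end CauchyBinet

section MaximalMinor

variable {R E : Type*} [CommRing R] [LinearOrder E] {d : ℕ}

/-- The maximal minor `det A_S` of a `d × E` matrix `A`, for a set `S` of `d` columns taken in
increasing order. -/
def maximalMinor (A : Matrix (Fin d) E R) (S : Finset E) (hS : #S = d) : R :=
  (A.submatrix id (S.orderEmbOfFin hS)).det

theorem maximalMinor_map {R' : Type*} [CommRing R'] (φ : R →+* R') (A : Matrix (Fin d) E R)
    {S : Finset E} (hS : #S = d) : maximalMinor (A.map φ) S hS = φ (maximalMinor A S hS) :=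
  (φ.map_det _).symm

variable [Fintype E]

theorem maximalMinor_mul_diagonal (A : Matrix (Fin d) E R) (w : E → R) {S : Finset E}
    (hS : #S = d) :
    maximalMinor (A * diagonal w) S hS = (∏ e ∈ S, w e) * maximalMinor A S hS := by
  have prod_eq : ∏ j, w (S.orderEmbOfFin hS j) = ∏ e ∈ S, w e := by
    rw [← prod_coe_sort S]
    exact (S.orderIsoOfFin hS).toEquiv.prod_comp fun e ↦ w e
  rw [maximalMinor, maximalMinor, ← prod_eq, ← det_mul_row]
  congr 1
  ext i j
  simp [mul_comm]

/-- The Cauchy–Binet formula. -/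
theorem det_mul_transpose_eq_sum_maximalMinor (A B : Matrix (Fin d) E R) :
    (A * Bᵀ).det =
      ∑ S : Finset E, if hS : #S = d then maximalMinor A S hS * maximalMinor B S hS else 0 := by
  rw [det_mul_eq_sum_det_submatrix_mul_prod, ← sum_fiberwise univ fun f ↦ univ.image f]
  refine sum_congr rfl fun S _ ↦ ?_
  split_ifs with hS
  · have image_enum : univ.image (S.orderEmbOfFin hS) = S := by simp
    have fiber_sum :=
      sum_image_eq_image_det_submatrix_mul_prod A Bᵀ (S.orderEmbOfFin hS).injective
    rw [image_enum] at fiber_sum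
    rw [fiber_sum, ← transpose_submatrix, det_transpose]
    rfl
  · refine sum_eq_zero fun f hf ↦ ?_
    have not_injective : ¬ Function.Injective f := fun hinj ↦ hS <| by
      rw [← (mem_filter.1 hf).2, card_image_of_injective _ hinj, card_univ, Fintype.card_fin]
    rw [det_submatrix_eq_zero_of_not_injective A not_injective, zero_mul]

end MaximalMinor

section ComplementaryMinors

variable {R E m n : Type*} [CommRing R] [DecidableEq m] [DecidableEq n]

theorem exists_fromRows_mul_fromCols_eq_one [Fintype E] [Finite n]
    {P : Matrix m E R} {Q : Matrix n E R} {P' : Matrix E m R} {Q' : Matrix E n R}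
    (hP : P * P' = 1) (hQ : Q * Q' = 1) (hPQ : P * Qᵀ = 0) :
    ∃ (T : Matrix n E R) (N : Matrix E m R), fromRows P T * fromCols N Qᵀ = 1 := by
  cases nonempty_fintype n
  have hT : Q'ᵀ * Qᵀ = 1 := by rw [← transpose_mul, hQ, transpose_one]
  refine ⟨Q'ᵀ, P' - Qᵀ * (Q'ᵀ * P'), ?_⟩
  rw [fromRows_mul_fromCols, Matrix.mul_sub, Matrix.mul_sub, ← Matrix.mul_assoc P,
    ← Matrix.mul_assoc Q'ᵀ Qᵀ, hP, hPQ, hT, Matrix.zero_mul, Matrix.one_mul, sub_zero, sub_self,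
    fromBlocks_one]

variable [Fintype m] [Fintype n]

/-- Jacobi's identity for complementary minors of a matrix and its inverse. -/
theorem det_toBlocks₁₁_eq_of_mul_eq_one {A B : Matrix (m ⊕ n) (m ⊕ n) R} (hAB : A * B = 1) :
    A.toBlocks₁₁.det = A.det * B.toBlocks₂₂.det := by
  have blocks : fromBlocks A.toBlocks₁₁ A.toBlocks₁₂ A.toBlocks₂₁ A.toBlocks₂₂ *
      fromBlocks B.toBlocks₁₁ B.toBlocks₁₂ B.toBlocks₂₁ B.toBlocks₂₂ = fromBlocks 1 0 0 1 := by
    rw [fromBlocks_toBlocks, fromBlocks_toBlocks, hAB, fromBlocks_one]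
  rw [fromBlocks_multiply, fromBlocks_inj] at blocks
  obtain ⟨-, block₁₂, -, block₂₂⟩ := blocks
  have mul_eq : A * fromBlocks 1 B.toBlocks₁₂ 0 B.toBlocks₂₂ =
      fromBlocks A.toBlocks₁₁ 0 A.toBlocks₂₁ 1 := by
    rw [← fromBlocks_toBlocks A, fromBlocks_multiply]
    simp [block₁₂, block₂₂]
  simpa using (congrArg det mul_eq).symm

variable [Fintype E]

theorem det_submatrix_equiv_sq (M : Matrix m E R) (e : m ≃ E) :
    (M.submatrix id e).det ^ 2 = (M * Mᵀ).det := by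
  calc (M.submatrix id e).det ^ 2
      = (M.submatrix id e * (M.submatrix id e)ᵀ).det := by rw [det_mul, det_transpose, sq]
    _ = (M * Mᵀ).det := by rw [transpose_submatrix, submatrix_mul_equiv, submatrix_id_id]

theorem exists_unit_det_submatrix_sq_eq {P : Matrix m E R} {Q : Matrix n E R}
    {P' : Matrix E m R} {Q' : Matrix E n R} (hP : P * P' = 1) (hQ : Q * Q' = 1) (hPQ : P * Qᵀ = 0) :
    ∃ c : Rˣ, ∀ e : m ⊕ n ≃ E, (P.submatrix id (e ∘ Sum.inl)).det ^ 2 =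
      c * (Q.submatrix id (e ∘ Sum.inr)).det ^ 2 := by
  obtain ⟨T, N, hMN⟩ := exists_fromRows_mul_fromCols_eq_one hP hQ hPQ
  have square_mul (e : m ⊕ n ≃ E) :
      (fromRows P T).submatrix id e * (fromCols N Qᵀ).submatrix e id = 1 := by
    rw [submatrix_mul_equiv, hMN, submatrix_one _ Function.injective_id]
  rcases isEmpty_or_nonempty (m ⊕ n ≃ E) with hE | ⟨⟨e₀⟩⟩
  · exact ⟨1, hE.elim⟩
  have unit_det : IsUnit (fromRows P T * (fromRows P T)ᵀ).det := by
    rw [← det_submatrix_equiv_sq _ e₀]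
    exact (isUnit_det_of_right_inverse (square_mul e₀)).pow 2
  refine ⟨unit_det.unit, fun e ↦ ?_⟩
  have jacobi : (P.submatrix id (e ∘ Sum.inl)).det =
      ((fromRows P T).submatrix id e).det * (Q.submatrix id (e ∘ Sum.inr))ᵀ.det :=
    det_toBlocks₁₁_eq_of_mul_eq_one (square_mul e)
  rw [jacobi, det_transpose, mul_pow, det_submatrix_equiv_sq, IsUnit.unit_spec]

end ComplementaryMinors

theorem exists_mul_eq_one_of_rank_eq_card {K m E : Type*} [Field K] [Fintype m] [DecidableEq m]
    [Fintype E] {A : Matrix m E K} (hA : A.rank = Fintype.card m) :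
    ∃ B : Matrix E m K, A * B = 1 := by
  rw [← mulVec_surjective_iff_exists_right_inverse, ← coe_mulVecLin, ← LinearMap.range_eq_top]
  apply Submodule.eq_top_of_finrank_eq
  rw [Module.finrank_fintype_fun_eq_card, ← hA, rank]

section ConfigurationPolynomial

/-- The configuration polynomial `det (P * diag(A) * Pᵀ)` of the row space of `P`, in the variables
`A_e = X e`. It depends on the basis `P` of the row space only up to the square of a unit. -/
noncomputable def configPoly {R E n : Type*} [CommRing R] [Fintype E] [DecidableEq E] [Fintype n]
    [DecidableEq n] (P : Matrix n E R) : MvPolynomial E R :=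
  det (P.map (MvPolynomial.C (σ := E)) *
    diagonal (fun e : E ↦ (MvPolynomial.X e : MvPolynomial E R)) *
    (P.map (MvPolynomial.C (σ := E)))ᵀ)

variable {R E : Type*} [CommRing R] [Fintype E] [LinearOrder E] {d m : ℕ}

theorem configPoly_eq_sum_maximalMinor_sq (P : Matrix (Fin d) E R) :
    configPoly P = ∑ S : Finset E, if hS : #S = d then
      (∏ e ∈ S, MvPolynomial.X e) * MvPolynomial.C (maximalMinor P S hS ^ 2) else 0 := by
  rw [configPoly, det_mul_transpose_eq_sum_maximalMinor]
  refine sum_congr rfl fun S _ ↦ dite_congr rfl (fun hS ↦ ?_) fun _ ↦ rfl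
  rw [maximalMinor_mul_diagonal, maximalMinor_map, mul_assoc, ← map_mul, sq]

theorem exists_unit_maximalMinor_sq_eq (hdm : d + m = Fintype.card E)
    {P : Matrix (Fin d) E R} {Q : Matrix (Fin m) E R}
    {P' : Matrix E (Fin d) R} {Q' : Matrix E (Fin m) R}
    (hP : P * P' = 1) (hQ : Q * Q' = 1) (hPQ : P * Qᵀ = 0) :
    ∃ c : Rˣ, ∀ (S : Finset E) (hS : #S = d), maximalMinor P S hS ^ 2 =
      c * maximalMinor Q Sᶜ (by rw [card_compl]; lia) ^ 2 := by
  obtain ⟨c, hc⟩ := exists_unit_det_submatrix_sq_eq hP hQ hPQ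
  exact ⟨c, fun S hS ↦ hc (finSumEquivOfFinset hS (by rw [card_compl]; lia))⟩

theorem config_poly_functional_equation_general (hdm : d + m = Fintype.card E)
    (P : Matrix (Fin d) E R) (Q : Matrix (Fin m) E R)
    {P' : Matrix E (Fin d) R} {Q' : Matrix E (Fin m) R}
    (hP : P * P' = 1) (hQ : Q * Q' = 1) (hPQ : P * Qᵀ = 0) :
    ∃ c : Rˣ,
      (∀ (S : Finset E) (hS : #S = d), maximalMinor P S hS ^ 2 =
        c * maximalMinor Q Sᶜ (by rw [card_compl]; lia) ^ 2) ∧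
      configPoly P = MvPolynomial.C (c : R) * ∑ S : Finset E, if hS : #S = d then
        (∏ e ∈ S, MvPolynomial.X e) *
          MvPolynomial.C (maximalMinor Q Sᶜ (by rw [card_compl]; lia) ^ 2) else 0 := by
  obtain ⟨c, hc⟩ := exists_unit_maximalMinor_sq_eq hdm hP hQ hPQ
  refine ⟨c, hc, ?_⟩
  rw [configPoly_eq_sum_maximalMinor_sq, mul_sum]
  refine sum_congr rfl fun S _ ↦ ?_
  split_ifs with hS
  · rw [hc S hS, map_mul, mul_left_comm]
  · rw [mul_zero]

end ConfigurationPolynomial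

/-- **The functional equation for configuration polynomials** (duality between a
configuration and its annihilator).  Let `K` be a field, `E` finite linearly ordered
with `N := #E`, `0 < d < N`, `P` a `d × N` matrix of rank `d`, `Q` an
`(N−d) × N` matrix of rank `N−d`, with `P·Qᵀ = 0`.  Then there is `c ≠ 0` in `K`
such that `det(P_S)² = c·det(Q_{E∖S})²` for every `S ⊆ E` with `#S = d`, and
equivalently
`det(P·diag(A)·Pᵀ) = c·∑_{#S = d} (∏_{e∈S} A_e)·det(Q_{E∖S})²` in `K[A_e : e ∈ E]`. -/
theorem config_poly_functional_equation
    {K : Type} [Field K] {E : Type} [Fintype E] [LinearOrder E]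
    (d : ℕ) (hd : 0 < d) (hdN : d < Fintype.card E)
    (P : Matrix (Fin d) E K) (Q : Matrix (Fin (Fintype.card E - d)) E K)
    (hP : P.rank = d) (hQ : Q.rank = Fintype.card E - d)
    (hPQ : P * Qᵀ = 0) :
    ∃ c : K, c ≠ 0 ∧
      (∀ (S : Finset E) (h : S.card = d),
        Matrix.det (Matrix.of fun i j : Fin d => P i ((S.orderIsoOfFin h) j)) ^ 2 =
          c * Matrix.det (Matrix.of fun i j : Fin (Fintype.card E - d) =>
              Q i ((Sᶜ.orderIsoOfFin (by rw [Finset.card_compl, h])) j)) ^ 2) ∧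
      Matrix.det
          (P.map (MvPolynomial.C (σ := E)) *
            Matrix.diagonal (fun e : E => (MvPolynomial.X e : MvPolynomial E K)) *
            (P.map (MvPolynomial.C (σ := E)))ᵀ) =
        MvPolynomial.C c *
          ∑ S : Finset E,
            if h : S.card = d then
              (∏ e ∈ S, MvPolynomial.X e) *
                MvPolynomial.C
                  (Matrix.det (Matrix.of fun i j : Fin (Fintype.card E - d) =>
                    Q i ((Sᶜ.orderIsoOfFin (by rw [Finset.card_compl, h])) j)) ^ 2)
            else 0 := by
  obtain ⟨P', hP'⟩ := exists_mul_eq_one_of_rank_eq_card (hP.trans (Fintype.card_fin d).symm)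
  obtain ⟨Q', hQ'⟩ := exists_mul_eq_one_of_rank_eq_card (hQ.trans (Fintype.card_fin _).symm)
  obtain ⟨c, hc⟩ := config_poly_functional_equation_general (by lia) P Q hP' hQ' hPQ
  exact ⟨c, c.ne_zero, hc⟩
end

section
/- Let Γ be a finite connected simple graph (in the notation below) and let Ψ_Γ ∈ ℤ[A_e : e ∈ E] be its graph polynomial with respect to any ℤ-basis of ker ∂_ℤ. Then every coefficient of Ψ_Γ is equal to 0 or to 1. -/
open scoped BigOperators

variable {V : Type} [Fintype V] [LinearOrder V]

/-- The incidence sign of a vertex `v` in an edge `e` of a graph whose vertices are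
linearly ordered and whose edges are oriented from the smaller to the larger
endpoint: `+1` if `v` is the larger endpoint, `-1` if `v` is the smaller endpoint,
`0` otherwise. -/
def incSign (R : Type) [CommRing R] (v : V) (e : Sym2 V) : R :=
  (if v = Sym2.sup e then 1 else 0) - (if v = Sym2.inf e then 1 else 0)

/-- The incidence (boundary) map `∂_R : R^E → R^V` of a finite graph `G`, sending the
basis vector of an edge `e = {u,v}` with `u < v` to `1_v − 1_u`. -/
noncomputable def boundary (R : Type) [CommRing R] (G : SimpleGraph V)
    [Fintype G.edgeSet] : (G.edgeSet → R) →ₗ[R] (V → R) :=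
  Matrix.mulVecLin (Matrix.of fun (v : V) (e : G.edgeSet) => incSign R v e.1)

/-- The graph polynomial `Ψ_Γ = det(∑_e A_e·M_e)` of `G` with respect to a `ℤ`-basis
`b` of the cycle space `ker ∂_ℤ`, where `M_e` is the `d × d` matrix with entries
`(b i) e · (b j) e`; an element of the polynomial ring `ℤ[A_e : e ∈ E]`. -/
noncomputable def graphPoly (G : SimpleGraph V) [Fintype G.edgeSet] {d : ℕ}
    (b : Module.Basis (Fin d) ℤ (LinearMap.ker (boundary ℤ G))) :
    MvPolynomial (Sym2 V) ℤ :=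
  Matrix.det (Matrix.of fun i j : Fin d =>
    ∑ e : G.edgeSet, MvPolynomial.X (e : Sym2 V) *
      MvPolynomial.C (((b i : G.edgeSet → ℤ) e) * ((b j : G.edgeSet → ℤ) e)))

/-!
Let `H` be the matrix whose rows are the basis vectors of `ker ∂`. By the Cauchy–Binet formula the
graph polynomial is `∑ (det H_S)² ∏_{e ∈ S} A_e`, over the sets `S` of `d` edges, so it suffices
that every maximal minor `det H_S` is `0` or `±1`.

This holds for the kernel of any totally unimodular integer matrix `∂`. If a prime `p` divides
`det H_S`, some combination of the rows of `H` that is nonzero modulo `p` vanishes modulo `p` on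
`S`. Hence the columns of `∂` outside `S` are linearly dependent modulo `p`, and by total
unimodularity they are then dependent over `ℤ`: a nonzero integral kernel vector vanishes on `S`,
and `det H_S = 0`. Finally, the incidence matrix of an oriented graph is totally unimodular.
-/

open Matrix MvPolynomial

section ExponentVector

variable {n E : Type*} [Fintype n]

theorem sum_single_one_ne_zero_iff (f : n → E) (e : E) :
    (∑ i, Finsupp.single (f i) 1 : E →₀ ℕ) e ≠ 0 ↔ e ∈ Set.range f := by
  classical
  simp [Finsupp.single_apply]

theorem sum_single_one_eq_iff_exists_perm {f : n → E} (hf : f.Injective) (g : n → E) :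
    (∑ i, Finsupp.single (g i) 1 : E →₀ ℕ) = ∑ i, Finsupp.single (f i) 1 ↔
      ∃ τ : Equiv.Perm n, f ∘ τ = g := by
  constructor
  · intro h
    have range_eq : Set.range g = Set.range f := by
      ext e
      rw [← sum_single_one_ne_zero_iff, h, sum_single_one_ne_zero_iff]
    choose k hk using fun i ↦ range_eq.subset (Set.mem_range_self i)
    have hk_surj : k.Surjective := fun j ↦ by
      obtain ⟨i, hi⟩ := range_eq.superset (Set.mem_range_self j)
      exact ⟨i, hf ((hk i).trans hi)⟩
    exact ⟨.ofBijective k hk_surj.bijective_of_finite, funext hk⟩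
  · rintro ⟨τ, rfl⟩
    exact Equiv.sum_comp τ fun i ↦ Finsupp.single (f i) 1

end ExponentVector

section ConfigurationPolynomial

variable {n E R : Type*} [Fintype n] [DecidableEq n] [CommRing R]

theorem det_submatrix_id_eq_zero_of_not_injective_s5 (H : Matrix n E R) {f : n → E}
    (hf : ¬ f.Injective) : (H.submatrix id f).det = 0 := by
  obtain ⟨i, j, hij, hne⟩ := Function.not_injective_iff.mp hf
  exact det_zero_of_column_eq hne fun k ↦ by simp [hij]

theorem sum_perm_prod_mul_det_submatrix_s5 (H : Matrix n E R) (f : n → E) :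
    ∑ τ : Equiv.Perm n, (∏ i, H i (f (τ i))) * (H.submatrix id (f ∘ τ)).det =
      (H.submatrix id f).det ^ 2 := by
  have det_comp (τ : Equiv.Perm n) :
      (H.submatrix id (f ∘ τ)).det = (Equiv.Perm.sign τ : ℤ) * (H.submatrix id f).det :=
    det_permute' τ (H.submatrix id f)
  have det_eq : (H.submatrix id f).det =
      ∑ τ : Equiv.Perm n, (Equiv.Perm.sign τ : ℤ) * ∏ i, H i (f (τ i)) := by
    rw [← det_transpose, det_apply']
    rfl
  calc _ = ∑ τ : Equiv.Perm n, (Equiv.Perm.sign τ : ℤ) * (∏ i, H i (f (τ i))) *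
        (H.submatrix id f).det := by
        refine Finset.sum_congr rfl fun τ _ ↦ ?_
        rw [det_comp]
        ring
    _ = (H.submatrix id f).det ^ 2 := by rw [← Finset.sum_mul, ← det_eq, sq]

variable [Fintype E]

theorem det_mul_eq_sum_fun (A : Matrix n E R) (B : Matrix E n R) :
    (A * B).det = ∑ f : n → E, (∏ i, A i (f i)) * (B.submatrix f id).det := by
  classical
  have rows_eq : A * B = fun i ↦ ∑ e, A i e • B.row e := by
    ext i j
    simp [mul_apply]
  calc (A * B).det
    _ = ∑ f : n → E, detRowAlternating fun i ↦ A i (f i) • B.row (f i) := by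
        rw [rows_eq]
        exact detRowAlternating.toMultilinearMap.map_sum _
    _ = ∑ f : n → E, (∏ i, A i (f i)) * (B.submatrix f id).det :=
        Finset.sum_congr rfl fun f _ ↦ detRowAlternating.map_smul_univ _ _

/-- The configuration polynomial `det (∑ₑ Aₑ Mₑ)` of the row space of `H`, where `Mₑ` is the
rank-one matrix with entries `H i e * H j e`. The graph polynomial is the case where the rows of `H`
form a basis of the cycle space. -/
noncomputable def configurationPoly (H : Matrix n E R) : MvPolynomial E R :=
  det (of fun i j ↦ ∑ e, X e * C (H i e * H j e))

theorem configurationPoly_eq_sum_monomial (H : Matrix n E R) :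
    configurationPoly H = ∑ f : n → E, monomial (∑ i, Finsupp.single (f i) 1)
      ((∏ i, H i (f i)) * (H.submatrix id f).det) := by
  let weighted : Matrix n E (MvPolynomial E R) := of fun i e ↦ monomial (Finsupp.single e 1) (H i e)
  let constant : Matrix n E (MvPolynomial E R) := H.map C
  have factor : (of fun i j ↦ ∑ e, X e * C (H i e * H j e)) = weighted * constantᵀ := by
    ext1 i j
    simp only [weighted, constant, mul_apply, of_apply, transpose_apply, map_apply]
    refine Finset.sum_congr rfl fun e _ ↦ ?_
    rw [C_mul, ← mul_assoc, mul_comm (X e), C_mul_X_eq_monomial]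
  rw [configurationPoly, factor, det_mul_eq_sum_fun]
  refine Finset.sum_congr rfl fun f _ ↦ ?_
  have det_constant : (constantᵀ.submatrix f id).det = C (H.submatrix id f).det := by
    rw [← transpose_submatrix, det_transpose, RingHom.map_det]
    rfl
  simp only [weighted, of_apply]
  rw [det_constant, ← monomial_sum_prod, mul_comm, C_mul_monomial, mul_comm]

theorem coeff_configurationPoly_of_injective (H : Matrix n E R) {f : n → E} (hf : f.Injective) :
    coeff (∑ i, Finsupp.single (f i) 1) (configurationPoly H) = (H.submatrix id f).det ^ 2 := by
  classical
  rw [configurationPoly_eq_sum_monomial, coeff_sum, ← sum_perm_prod_mul_det_submatrix_s5]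
  simp only [coeff_monomial, sum_single_one_eq_iff_exists_perm hf]
  rw [← Finset.sum_filter]
  refine (Finset.sum_nbij (fun τ : Equiv.Perm n ↦ f ∘ τ) (by simp) ?_ ?_ fun _ _ ↦ rfl).symm
  · exact fun τ _ τ' _ h ↦ DFunLike.coe_injective (hf.comp_left h)
  · intro g hg
    simpa using hg

theorem coeff_configurationPoly_eq_zero (H : Matrix n E R) {m : E →₀ ℕ}
    (hm : ∀ f : n → E, f.Injective → ∑ i, Finsupp.single (f i) 1 ≠ m) :
    coeff m (configurationPoly H) = 0 := by
  classical
  rw [configurationPoly_eq_sum_monomial, coeff_sum]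
  refine Finset.sum_eq_zero fun f _ ↦ ?_
  rw [coeff_monomial]
  split_ifs with hfm
  · have hf : ¬ f.Injective := fun hf ↦ hm f hf hfm
    rw [det_submatrix_id_eq_zero_of_not_injective_s5 H hf, mul_zero]
  · rfl

theorem coeff_configurationPoly_eq_zero_or_det_sq (H : Matrix n E R) (m : E →₀ ℕ) :
    coeff m (configurationPoly H) = 0 ∨
      ∃ f : n → E, coeff m (configurationPoly H) = (H.submatrix id f).det ^ 2 := by
  by_cases! hm : ∃ f : n → E, f.Injective ∧ ∑ i, Finsupp.single (f i) 1 = m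
  · obtain ⟨f, hf, rfl⟩ := hm
    exact .inr ⟨f, coeff_configurationPoly_of_injective H hf⟩
  · exact .inl (coeff_configurationPoly_eq_zero H hm)

end ConfigurationPolynomial

section TotallyUnimodular

variable {m n : Type*} [Fintype n]

theorem exists_submatrix_det_ne_zero_of_linearIndependent_col {K : Type*} [Field K]
    [DecidableEq n] {A : Matrix m n K} (hA : LinearIndependent K A.col) :
    ∃ g : n → m, (A.submatrix g id).det ≠ 0 := by
  have span_rows : Submodule.span K (Set.range A.row) = ⊤ :=
    span_flip_eq_top_iff_linearIndependent.mpr hA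
  obtain ⟨κ, a, -, span_a, indep_a⟩ := exists_linearIndependent' K A.row
  let rowBasis : Module.Basis κ K (n → K) := .mk indep_a (span_a.trans span_rows).ge
  let σ : n ≃ κ := (Pi.basisFun K n).indexEquiv rowBasis
  refine ⟨a ∘ σ, ?_⟩
  have indep_rows : LinearIndependent K (A.submatrix (a ∘ σ) id).row :=
    indep_a.comp σ σ.injective
  exact ((isUnit_iff_isUnit_det _).mp (linearIndependent_rows_iff_isUnit.mp indep_rows)).ne_zero

theorem mulVec_map_injective_of_isTotallyUnimodular {A : Matrix m n ℤ}
    (hA : A.IsTotallyUnimodular) (hinj : Function.Injective A.mulVec)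
    (S : Type*) [CommRing S] : Function.Injective (A.map (Int.castRingHom S)).mulVec := by
  classical
  have indep_rat : LinearIndependent ℚ (A.map (Int.castRingHom ℚ)).col := by
    rw [← LinearIndependent.iff_fractionRing ℤ ℚ]
    let castVec : (m → ℤ) →ₗ[ℤ] (m → ℚ) := (Algebra.linearMap ℤ ℚ).compLeft m
    have castVec_inj : Function.Injective castVec := Int.cast_injective.comp_left
    exact (mulVec_injective_iff.mp hinj).map' castVec (LinearMap.ker_eq_bot.mpr castVec_inj)
  obtain ⟨g, hg⟩ := exists_submatrix_det_ne_zero_of_linearIndependent_col indep_rat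
  have isUnit_minor : IsUnit (A.submatrix g id).det := by
    obtain ⟨s, hs⟩ := (isTotallyUnimodular_iff_fintype A).mp hA n g id
    have det_cast : ((A.map (Int.castRingHom ℚ)).submatrix g id).det =
        ((A.submatrix g id).det : ℚ) := ((Int.castRingHom ℚ).map_det _).symm
    rw [det_cast, ← hs] at hg
    rw [← hs]
    cases s <;> simp at hg ⊢
  have isUnit_minor_map : IsUnit ((A.map (Int.castRingHom S)).submatrix g id) := by
    rw [isUnit_iff_isUnit_det]
    have := isUnit_minor.map (Int.castRingHom S)
    rwa [RingHom.map_det] at this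
  intro x y hxy
  exact mulVec_injective_of_isUnit isUnit_minor_map (congrArg (· ∘ g) hxy)

theorem submatrix_id_mulVec_comp {n' S : Type*} [Fintype n'] [CommRing S] (A : Matrix m n S)
    {e : n' → n} (he : e.Injective) {x : n → S} (hx : ∀ j ∉ Set.range e, x j = 0) :
    A.submatrix id e *ᵥ (x ∘ e) = A *ᵥ x := by
  ext i
  exact Fintype.sum_of_injective e he _ _ (fun j hj ↦ by rw [hx j hj, mul_zero]) fun _ ↦ rfl

theorem eq_zero_of_map_mulVec_eq_zero {A : Matrix m n ℤ} (hA : A.IsTotallyUnimodular) {T : Set n}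
    (hT : ∀ c : n → ℤ, A *ᵥ c = 0 → (∀ e ∈ T, c e = 0) → c = 0)
    {S : Type*} [CommRing S] {x : n → S} (hx : A.map (Int.castRingHom S) *ᵥ x = 0)
    (hxT : ∀ e ∈ T, x e = 0) : x = 0 := by
  classical
  let incl : ↥Tᶜ → n := (↑)
  have incl_inj : incl.Injective := Subtype.val_injective
  let B := A.submatrix id incl
  have B_inj : Function.Injective B.mulVec := by
    refine (injective_iff_map_eq_zero B.mulVecLin).mpr fun y hy ↦ ?_
    let c : n → ℤ := Function.extend incl y 0
    have c_comp : c ∘ incl = y := Function.extend_comp incl_inj y 0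
    have cT : ∀ e ∈ T, c e = 0 := fun e he ↦ Function.extend_apply' _ _ _ (by simp [incl, he])
    have hc : A *ᵥ c = 0 := by
      rw [← submatrix_id_mulVec_comp A incl_inj (by simpa [incl] using cT), c_comp]
      exact hy
    rw [← c_comp, hT c hc cT]
    rfl
  have x_comp : x ∘ incl = 0 := by
    apply mulVec_map_injective_of_isTotallyUnimodular (hA.submatrix id incl) B_inj S
    rw [mulVec_zero, ← hx, ← submatrix_id_mulVec_comp _ incl_inj (by simpa [incl] using hxT)]
    rfl
  ext e
  by_cases he : e ∈ T
  · exact hxT e he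
  · exact congrFun x_comp ⟨e, he⟩

end TotallyUnimodular

section BasisMatrix

variable {ι m n R : Type*} [CommRing R]

/-- The matrix whose rows are the vectors of a basis `b` of a submodule of `n → R`; the squares of
its maximal minors are the coefficients of the configuration polynomial. -/
noncomputable def basisMatrix {K : Submodule R (n → R)} (b : Module.Basis ι R K) : Matrix ι n R :=
  of fun i ↦ (b i : n → R)

theorem mul_transpose_basisMatrix [Fintype n] {A : Matrix m n R}
    (b : Module.Basis ι R (LinearMap.ker A.mulVecLin)) : A * (basisMatrix b)ᵀ = 0 := by
  ext v i
  exact congrFun (b i).2 v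

variable [Fintype ι]

theorem vecMul_basisMatrix {K : Submodule R (n → R)} (b : Module.Basis ι R K)
    (w : ι → R) : w ᵥ* basisMatrix b = (b.equivFun.symm w : n → R) := by
  ext e
  simp [basisMatrix, vecMul, dotProduct]

theorem eq_zero_of_det_submatrix_basisMatrix_ne_zero [DecidableEq ι] [IsDomain R]
    {K : Submodule R (n → R)} (b : Module.Basis ι R K) {f : ι → n}
    (hdet : ((basisMatrix b).submatrix id f).det ≠ 0) {c : n → R} (hc : c ∈ K)
    (hcf : ∀ i, c (f i) = 0) : c = 0 := by
  have c_eq : c = b.equivFun ⟨c, hc⟩ ᵥ* basisMatrix b := by simp [vecMul_basisMatrix]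
  have coords_eq_zero : b.equivFun ⟨c, hc⟩ = 0 :=
    eq_zero_of_vecMul_eq_zero hdet <| funext fun i ↦ (congrFun c_eq (f i)).symm.trans (hcf i)
  rw [c_eq, coords_eq_zero, zero_vecMul]

variable [Fintype n]

theorem dvd_of_dvd_vecMul_basisMatrix [IsDomain R] {A : Matrix m n R}
    (b : Module.Basis ι R (LinearMap.ker A.mulVecLin)) {a : R} (ha : a ≠ 0) {w : ι → R}
    (hw : ∀ e, a ∣ (w ᵥ* basisMatrix b) e) (i : ι) : a ∣ w i := by
  choose y hy using hw
  have smul_y : (b.equivFun.symm w : n → R) = a • y := by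
    rw [← vecMul_basisMatrix]
    exact funext hy
  have hy_ker : y ∈ LinearMap.ker A.mulVecLin := by
    have h : A.mulVecLin (a • y) = 0 := smul_y ▸ (b.equivFun.symm w).2
    rw [map_smul] at h
    exact (smul_eq_zero.mp h).resolve_left ha
  have w_eq : w = a • b.equivFun ⟨y, hy_ker⟩ := by
    rw [← map_smul, ← LinearEquiv.symm_apply_eq]
    exact Subtype.ext smul_y
  rw [w_eq]
  exact dvd_mul_right _ _

theorem vecMul_map_basisMatrix_injective {A : Matrix m n ℤ}
    (b : Module.Basis ι ℤ (LinearMap.ker A.mulVecLin)) (N : ℕ) [NeZero N] :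
    Function.Injective fun v ↦ v ᵥ* (basisMatrix b).map (Int.castRingHom (ZMod N)) := by
  refine (injective_iff_map_eq_zero
    ((basisMatrix b).map (Int.castRingHom (ZMod N))).vecMulLinear).mpr fun v hv ↦ ?_
  obtain ⟨w, rfl⟩ := (ZMod.intCast_surjective (n := N)).comp_left v
  ext i
  refine (ZMod.intCast_zmod_eq_zero_iff_dvd _ _).mpr <|
    dvd_of_dvd_vecMul_basisMatrix b (mod_cast NeZero.ne N) (fun e ↦ ?_) i
  rw [← ZMod.intCast_zmod_eq_zero_iff_dvd]
  exact (RingHom.map_vecMul (Int.castRingHom (ZMod N)) _ w e).trans (congrFun hv e)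

variable [DecidableEq ι]

theorem isUnit_det_submatrix_basisMatrix {A : Matrix m n ℤ} (hA : A.IsTotallyUnimodular)
    (b : Module.Basis ι ℤ (LinearMap.ker A.mulVecLin)) {f : ι → n}
    (hdet : ((basisMatrix b).submatrix id f).det ≠ 0) :
    IsUnit ((basisMatrix b).submatrix id f).det := by
  by_contra hunit
  obtain ⟨p, hp, hpdvd⟩ := Nat.exists_prime_and_dvd (mt Int.isUnit_iff_natAbs_eq.mpr hunit)
  have : Fact p.Prime := ⟨hp⟩
  let H := (basisMatrix b).map (Int.castRingHom (ZMod p))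
  have det_mod : (H.submatrix id f).det = 0 := by
    have : Int.castRingHom (ZMod p) ((basisMatrix b).submatrix id f).det = 0 :=
      (ZMod.intCast_zmod_eq_zero_iff_dvd _ _).mpr (Int.natCast_dvd.mpr hpdvd)
    rwa [RingHom.map_det] at this
  obtain ⟨v, hv, hvf⟩ := exists_vecMul_eq_zero_iff.mpr det_mod
  have ker_mod : A.map (Int.castRingHom (ZMod p)) *ᵥ (v ᵥ* H) = 0 := by
    rw [← mulVec_transpose, mulVec_mulVec, ← transpose_map, ← Matrix.map_mul,
      mul_transpose_basisMatrix, Matrix.map_zero _ (map_zero _), zero_mulVec]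
  have vecMul_eq_zero : v ᵥ* H = 0 := by
    refine eq_zero_of_map_mulVec_eq_zero hA (T := Set.range f) (fun c hc hcf ↦ ?_) ker_mod ?_
    · exact eq_zero_of_det_submatrix_basisMatrix_ne_zero b hdet hc (Set.forall_mem_range.mp hcf)
    · exact Set.forall_mem_range.mpr (congrFun hvf)
  exact hv (vecMul_map_basisMatrix_injective b p (vecMul_eq_zero.trans (zero_vecMul H).symm))

theorem coeff_configurationPoly_basisMatrix_eq_zero_or_one {A : Matrix m n ℤ}
    (hA : A.IsTotallyUnimodular) (b : Module.Basis ι ℤ (LinearMap.ker A.mulVecLin))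
    (k : n →₀ ℕ) :
    coeff k (configurationPoly (basisMatrix b)) = 0 ∨
      coeff k (configurationPoly (basisMatrix b)) = 1 := by
  obtain hk | ⟨f, hk⟩ := coeff_configurationPoly_eq_zero_or_det_sq (basisMatrix b) k
  · exact .inl hk
  rw [hk]
  by_cases hdet : ((basisMatrix b).submatrix id f).det = 0
  · exact .inl (by rw [hdet, zero_pow two_ne_zero])
  · exact .inr (Int.isUnit_sq (isUnit_det_submatrix_basisMatrix hA b hdet))

end BasisMatrix

section Incidence

variable {W E R : Type*} [DecidableEq W] [CommRing R]

/-- The oriented incidence matrix of the directed multigraph with source map `s` and target map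
`t`; the column of a loop is zero. It represents the boundary map of a simple graph when `s` and `t`
pick the smaller and the larger endpoint. -/
def orientedIncMatrix (R : Type*) [CommRing R] (s t : E → W) : Matrix W E R :=
  of fun v e ↦ (if v = t e then 1 else 0) - (if v = s e then 1 else 0)

theorem det_eq_zero_of_sum_rows_eq_zero {n : Type*} [Fintype n] [DecidableEq n] [Nonempty n]
    {M : Matrix n n R} (hM : ∀ j, ∑ i, M i j = 0) : M.det = 0 := by
  have one_vecMul : (1 : n → R) ᵥ* M = 0 := by
    ext j
    simpa [vecMul, dotProduct] using hM j
  have det_smul_one : M.det • (1 : n → R) = 0 := by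
    rw [← vecMul_one (1 : n → R), ← vecMul_smul, ← mul_adjugate, ← vecMul_vecMul, one_vecMul,
      zero_vecMul]
  simpa using congrFun det_smul_one (Classical.arbitrary n)

theorem sum_orientedIncMatrix_eq_zero {κ : Type*} [Fintype κ] {f : κ → W} (hf : f.Injective)
    (s t : E → W) {e : E} (hs : s e ∈ Set.range f) (ht : t e ∈ Set.range f) :
    ∑ i, orientedIncMatrix R s t (f i) e = 0 := by
  classical
  obtain ⟨i, hi⟩ := hs
  obtain ⟨j, hj⟩ := ht
  simp [orientedIncMatrix, ← hi, ← hj, hf.eq_iff]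

theorem det_mem_range_signType_cast_of_column {k : ℕ} {M : Matrix (Fin (k + 1)) (Fin (k + 1)) R}
    {i j : Fin (k + 1)} (hzero : ∀ i' ≠ i, M i' j = 0)
    (hentry : M i j ∈ Set.range SignType.cast)
    (hminor : (M.submatrix i.succAbove j.succAbove).det ∈ Set.range SignType.cast) :
    M.det ∈ Set.range SignType.cast := by
  rw [det_succ_column M j, Finset.sum_eq_single i (fun i' _ hi' ↦ by simp [hzero i' hi']) (by simp)]
  obtain ⟨a, ha⟩ := hentry
  obtain ⟨c, hc⟩ := hminor
  exact ⟨(-1) ^ (i + j : ℕ) * a * c, by simp [ha, hc]⟩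

theorem exists_forall_ne_orientedIncMatrix_eq_zero {κ : Type*} [Nonempty κ] {f : κ → W}
    (hf : f.Injective) (s t : E → W) {e : E} (he : ¬ (s e ∈ Set.range f ∧ t e ∈ Set.range f)) :
    ∃ i, ∀ i' ≠ i, orientedIncMatrix R s t (f i') e = 0 := by
  by_cases hs : s e ∈ Set.range f
  · obtain ⟨i, hi⟩ := hs
    refine ⟨i, fun i' hi' ↦ ?_⟩
    have ht : f i' ≠ t e := fun h ↦ he ⟨⟨i, hi⟩, ⟨i', h⟩⟩
    simp [orientedIncMatrix, ht, ← hi, hf.ne hi']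
  · have hs' (i : κ) : f i ≠ s e := fun h ↦ hs ⟨i, h⟩
    by_cases ht : t e ∈ Set.range f
    · obtain ⟨i, hi⟩ := ht
      exact ⟨i, fun i' hi' ↦ by simp [orientedIncMatrix, hs', ← hi, hf.ne hi']⟩
    · have ht' (i : κ) : f i ≠ t e := fun h ↦ ht ⟨i, h⟩
      exact ⟨Classical.arbitrary κ, fun i' _ ↦ by simp [orientedIncMatrix, hs', ht']⟩

theorem orientedIncMatrix_mem_range_signType_cast (s t : E → W) (v : W) (e : E) :
    orientedIncMatrix R s t v e ∈ Set.range SignType.cast := by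
  by_cases ht : v = t e <;> by_cases hs : v = s e
  · exact ⟨0, by simp [orientedIncMatrix, ← ht, ← hs]⟩
  · exact ⟨1, by simp [orientedIncMatrix, ← ht, hs]⟩
  · exact ⟨-1, by simp [orientedIncMatrix, ht, ← hs]⟩
  · exact ⟨0, by simp [orientedIncMatrix, ht, hs]⟩

theorem isTotallyUnimodular_orientedIncMatrix (s t : E → W) :
    (orientedIncMatrix R s t).IsTotallyUnimodular := by
  intro k
  induction k with
  | zero => exact fun f g _ _ ↦ ⟨1, by simp⟩
  | succ k ih =>
    intro f g hf hg
    by_cases! h : ∀ j, s (g j) ∈ Set.range f ∧ t (g j) ∈ Set.range f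
    · have sum_rows (j) : ∑ i, (orientedIncMatrix R s t).submatrix f g i j = 0 :=
        sum_orientedIncMatrix_eq_zero hf s t (h j).1 (h j).2
      exact ⟨0, by simp [det_eq_zero_of_sum_rows_eq_zero sum_rows]⟩
    · obtain ⟨j, hj⟩ := h
      obtain ⟨i, hi⟩ :=
        exists_forall_ne_orientedIncMatrix_eq_zero (R := R) hf s t (not_and.mpr hj)
      refine det_mem_range_signType_cast_of_column hi
        (orientedIncMatrix_mem_range_signType_cast s t (f i) (g j)) ?_
      rw [submatrix_submatrix]
      exact ih _ _ (hf.comp Fin.succAbove_right_injective) (hg.comp Fin.succAbove_right_injective)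

end Incidence

section GraphPolynomial

variable {W : Type} [LinearOrder W]

theorem isTotallyUnimodular_incSign (R : Type) [CommRing R] (G : SimpleGraph W) :
    (of fun v (e : G.edgeSet) ↦ incSign R v e.1).IsTotallyUnimodular :=
  isTotallyUnimodular_orientedIncMatrix (fun e : G.edgeSet ↦ e.1.inf) fun e ↦ e.1.sup

theorem graphPoly_eq_rename_configurationPoly (G : SimpleGraph W) [Fintype G.edgeSet] {d : ℕ}
    (b : Module.Basis (Fin d) ℤ (LinearMap.ker (boundary ℤ G))) :
    graphPoly G b = rename (↑) (configurationPoly (basisMatrix b)) := by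
  rw [graphPoly, configurationPoly, AlgHom.map_det]
  congr 1
  ext1 i j
  simp [basisMatrix]

theorem graphPoly_coeff_zero_or_one_general
    (G : SimpleGraph W) [Fintype G.edgeSet]
    {d : ℕ} (b : Module.Basis (Fin d) ℤ (LinearMap.ker (boundary ℤ G)))
    (m : (Sym2 W) →₀ ℕ) :
    MvPolynomial.coeff m (graphPoly G b) = 0 ∨
      MvPolynomial.coeff m (graphPoly G b) = 1 := by
  rw [graphPoly_eq_rename_configurationPoly, or_iff_not_imp_left]
  intro hm
  obtain ⟨k, rfl, hk⟩ := coeff_rename_ne_zero _ _ _ hm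
  rw [coeff_rename_mapDomain _ Subtype.val_injective]
  exact (coeff_configurationPoly_basisMatrix_eq_zero_or_one
    (isTotallyUnimodular_incSign ℤ G) b k).resolve_left hk

end GraphPolynomial

/-- **All coefficients of the graph polynomial are `0` or `1`** (Corollary 2.4 of
Bloch–Esnault–Kreimer), for a finite connected simple graph and any `ℤ`-basis of its
cycle space. -/
theorem graphPoly_coeff_zero_or_one
    (G : SimpleGraph V) [Fintype G.edgeSet] (hG : G.Connected)
    {d : ℕ} (b : Module.Basis (Fin d) ℤ (LinearMap.ker (boundary ℤ G)))
    (m : (Sym2 V) →₀ ℕ) :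
    MvPolynomial.coeff m (graphPoly G b) = 0 ∨
      MvPolynomial.coeff m (graphPoly G b) = 1 := by
  exact graphPoly_coeff_zero_or_one_general G b m
end

section
/- Let Γ be a finite connected simple graph (in the notation below) with graph polynomial Ψ_Γ ∈ ℤ[A_e : e ∈ E], and let S ⊆ E. Then the polynomial obtained from Ψ_Γ by substituting A_e = 0 for every e ∈ S is the zero polynomial if and only if h_1(S) > 0 (i.e., if and only if the subgraph of Γ with edge set S contains a cycle). Geometrically: the coordinate linear subspace {A_e = 0 for all e ∈ S} is contained in the graph hypersurface Ψ_Γ = 0 exactly when h_1(S) > 0. -/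
open scoped BigOperators

variable {V : Type} [Fintype V] [LinearOrder V]

/-- The submodule of `R^E` spanned by the basis vectors of the edges in `S`,
i.e. the functions on the edges of `G` vanishing outside of `S`. -/
def supportedIn (R : Type) [Field R] (G : SimpleGraph V) [Fintype G.edgeSet]
    (S : Set (Sym2 V)) : Submodule R (G.edgeSet → R) where
  carrier := {f | ∀ e : G.edgeSet, (e : Sym2 V) ∉ S → f e = 0}
  add_mem' := by
    intro f g hf hg e he
    simp only [Pi.add_apply, hf e he, hg e he, add_zero]
  zero_mem' := by
    intro e he
    rfl
  smul_mem' := by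
    intro c f hf e he
    simp only [Pi.smul_apply, hf e he, smul_zero]

/-- `h_1(S)` for a set `S` of edges of `G`: the dimension over `ℚ` of the kernel of
the boundary map restricted to the span of the basis vectors of the edges in `S`. -/
noncomputable def h1S (G : SimpleGraph V) [Fintype G.edgeSet] (S : Set (Sym2 V)) : ℕ :=
  Module.finrank ℚ ↥(LinearMap.ker (boundary ℚ G) ⊓ supportedIn ℚ G S)

/-!
Write `B` for the `d × E` matrix whose rows are the chosen basis of integral cycles, so that
`Ψ_Γ = det (B · diag(A) · Bᵀ)`. A combination `c` of the rows is killed by `B · diag(A) · Bᵀ` as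
soon as the cycle `c B` vanishes wherever `A` does not, so a cycle supported in `S` forces the
restriction of `Ψ_Γ` to vanish. Conversely, put the remaining variables equal to `1`: a kernel
vector `c` of the resulting integer matrix satisfies `0 = ∑_{e ∉ S} (c B)(e)²`, so `c B` is a cycle
supported in `S`. Rational and integral cycles are interchangeable after clearing denominators.
-/

theorem algebraMap_comp_eq_zero_iff {n R A : Type*} [CommSemiring R] [Semiring A] [Algebra R A]
    [FaithfulSMul R A] (z : n → R) : algebraMap R A ∘ z = 0 ↔ z = 0 := by
  simp [funext_iff]

section WeightedGram

open Matrix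

variable {m n R A : Type*} [Fintype n] [DecidableEq n] [CommRing R] [CommRing A]

/-- The Gram matrix of the rows of `B` for the diagonal bilinear form with weights `w`; for cycles
of a graph and `w` the edge variables, its determinant is the graph polynomial. -/
def weightedGram (B : Matrix m n R) (w : n → R) : Matrix m m R :=
  B * diagonal w * Bᵀ

theorem weightedGram_apply (B : Matrix m n R) (w : n → R) (i j : m) :
    weightedGram B w i j = ∑ e, w e * (B i e * B j e) := by
  rw [weightedGram, mul_apply]
  simp only [mul_diagonal, transpose_apply]
  exact Finset.sum_congr rfl fun e _ => by ring

theorem map_weightedGram (f : R →+* A) (B : Matrix m n R) (w : n → R) :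
    (weightedGram B w).map f = weightedGram (B.map f) (f ∘ w) := by
  ext i j
  simp [weightedGram_apply]

variable [Fintype m]

theorem weightedGram_mulVec (B : Matrix m n R) (w : n → R) (c : m → R) :
    weightedGram B w *ᵥ c = B *ᵥ (w * (c ᵥ* B)) := by
  have diagonal_mulVec_eq_mul : diagonal w *ᵥ (c ᵥ* B) = w * (c ᵥ* B) :=
    funext fun e => mulVec_diagonal w _ e
  rw [weightedGram, ← mulVec_mulVec, mulVec_transpose, ← mulVec_mulVec, diagonal_mulVec_eq_mul]

theorem dotProduct_weightedGram_mulVec (B : Matrix m n R) (w : n → R) (c : m → R) :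
    c ⬝ᵥ weightedGram B w *ᵥ c = ∑ e, w e * (c ᵥ* B) e ^ 2 := by
  rw [weightedGram_mulVec, dotProduct_mulVec, dotProduct]
  exact Finset.sum_congr rfl fun e _ => by simp only [Pi.mul_apply]; ring

variable [DecidableEq m]

theorem det_weightedGram_eq_zero [IsDomain R] {B : Matrix m n R} {w : n → R} {c : m → R}
    (hc : c ≠ 0) (hwc : w * (c ᵥ* B) = 0) : (weightedGram B w).det = 0 :=
  exists_mulVec_eq_zero_iff.mp ⟨c, hc, by rw [weightedGram_mulVec, hwc, mulVec_zero]⟩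

variable [LinearOrder R] [IsStrictOrderedRing R]

theorem exists_mul_vecMul_eq_zero_of_det_weightedGram_eq_zero {B : Matrix m n R} {w : n → R}
    (hw : 0 ≤ w) (hdet : (weightedGram B w).det = 0) : ∃ c ≠ 0, w * (c ᵥ* B) = 0 := by
  obtain ⟨c, hc, hker⟩ := exists_mulVec_eq_zero_iff.mpr hdet
  have sum_eq_zero : ∑ e, w e * (c ᵥ* B) e ^ 2 = 0 := by
    rw [← dotProduct_weightedGram_mulVec, hker, dotProduct_zero]
  have terms_eq_zero := (Fintype.sum_eq_zero_iff_of_nonneg fun e =>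
    mul_nonneg (hw e) (sq_nonneg ((c ᵥ* B) e))).mp sum_eq_zero
  refine ⟨c, hc, funext fun e => ?_⟩
  simpa using congrFun terms_eq_zero e

theorem det_weightedGram_restrict_eq_zero_iff {σ : Type*} (B : Matrix m n R) (x : n → σ)
    (S : Set σ) [DecidablePred (· ∈ S)] :
    (weightedGram (B.map MvPolynomial.C)
        fun e => if x e ∈ S then (0 : MvPolynomial σ R) else MvPolynomial.X (x e)).det = 0 ↔
      ∃ c ≠ 0, ∀ e, x e ∉ S → (c ᵥ* B) e = 0 := by
  constructor
  · intro hdet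
    let evalOne : MvPolynomial σ R →+* R := MvPolynomial.eval 1
    have det_eval_eq_zero : (weightedGram B fun e => if x e ∈ S then 0 else 1).det = 0 := by
      have h := congrArg evalOne hdet
      rw [evalOne.map_det, evalOne.mapMatrix_apply, map_weightedGram, map_zero] at h
      convert h using 3
      · ext i e
        simp [evalOne]
      · ext e
        simp [evalOne, apply_ite (MvPolynomial.eval (1 : σ → R))]
    obtain ⟨c, hc, hwc⟩ := exists_mul_vecMul_eq_zero_of_det_weightedGram_eq_zero
      (fun e => by dsimp only [Pi.zero_apply]; split_ifs <;> simp) det_eval_eq_zero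
    exact ⟨c, hc, fun e he => by simpa [he] using congrFun hwc e⟩
  · rintro ⟨c, hc, hcS⟩
    have map_ne_zero : MvPolynomial.C (σ := σ) ∘ c ≠ 0 :=
      (algebraMap_comp_eq_zero_iff c).not.mpr hc
    refine det_weightedGram_eq_zero map_ne_zero (funext fun e => ?_)
    rw [Pi.mul_apply, ← RingHom.map_vecMul]
    by_cases he : x e ∈ S <;> simp [he, hcS]

end WeightedGram

section ClearDenominators

open Matrix

variable {m n R K : Type*} [CommRing R] [CommRing K] [Algebra R K]

theorem exists_algebraMap_comp_eq_smul [Finite n] (T : Submonoid R) [IsLocalization T K]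
    (q : n → K) : ∃ r : T, ∃ z : n → R, algebraMap R K ∘ z = algebraMap R K r • q := by
  obtain ⟨r, hr⟩ := IsLocalization.exist_integer_multiples_of_finite T q
  choose z hz using hr
  exact ⟨r, z, funext fun e => by simp [hz, Algebra.smul_def]⟩

theorem exists_map_mulVec_eq_zero_iff_of_isFractionRing [IsFractionRing R K] [Fintype n]
    (M : Matrix m n R) (S : Set n) :
    (∃ q : n → K, q ≠ 0 ∧ M.map (algebraMap R K) *ᵥ q = 0 ∧ ∀ e ∉ S, q e = 0) ↔
      ∃ z : n → R, z ≠ 0 ∧ M *ᵥ z = 0 ∧ ∀ e ∉ S, z e = 0 := by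
  have map_mulVec_comp (z : n → R) :
      M.map (algebraMap R K) *ᵥ (algebraMap R K ∘ z) = algebraMap R K ∘ (M *ᵥ z) :=
    funext fun i => ((algebraMap R K).map_mulVec M z i).symm
  constructor
  · rintro ⟨q, hq, hMq, hqS⟩
    obtain ⟨r, z, hz⟩ := exists_algebraMap_comp_eq_smul (nonZeroDivisors R) q
    have isUnit_r : IsUnit (algebraMap R K r) := IsLocalization.map_units K r
    refine ⟨z, ?_, ?_, fun e he => ?_⟩
    · rwa [Ne, ← algebraMap_comp_eq_zero_iff (A := K), hz, isUnit_r.smul_eq_zero]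
    · rw [← algebraMap_comp_eq_zero_iff (A := K), ← map_mulVec_comp, hz, mulVec_smul, hMq,
        smul_zero]
    · simpa [hqS e he] using congrFun hz e
  · rintro ⟨z, hz, hMz, hzS⟩
    exact ⟨algebraMap R K ∘ z, by rwa [Ne, algebraMap_comp_eq_zero_iff],
      by rw [map_mulVec_comp, algebraMap_comp_eq_zero_iff, hMz], fun e he => by simp [hzS e he]⟩

end ClearDenominators

section Cycles

open Matrix

variable {W : Type} [LinearOrder W]

theorem map_incSign {R A : Type} [CommRing R] [CommRing A] (f : R →+* A) (v : W) (e : Sym2 W) :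
    f (incSign R v e) = incSign A v e := by
  simp [incSign, apply_ite f]

variable {G : SimpleGraph W} [Fintype G.edgeSet]

theorem h1S_pos_iff_exists_ne_zero (S : Set (Sym2 W)) :
    0 < h1S G S ↔ ∃ q : G.edgeSet → ℚ,
      q ≠ 0 ∧ boundary ℚ G q = 0 ∧ ∀ e : G.edgeSet, ↑e ∉ S → q e = 0 := by
  rw [h1S, Module.finrank_pos_iff, Submodule.nontrivial_iff_ne_bot, Submodule.ne_bot_iff]
  exact exists_congr fun q => and_comm

theorem exists_boundary_rat_eq_zero_iff_int (S : Set (Sym2 W)) :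
    (∃ q : G.edgeSet → ℚ, q ≠ 0 ∧ boundary ℚ G q = 0 ∧ ∀ e : G.edgeSet, ↑e ∉ S → q e = 0) ↔
      ∃ z : G.edgeSet → ℤ, z ≠ 0 ∧ boundary ℤ G z = 0 ∧ ∀ e : G.edgeSet, ↑e ∉ S → z e = 0 := by
  let incidence (R : Type) [CommRing R] : Matrix W G.edgeSet R :=
    Matrix.of fun v e => incSign R v e.1
  have map_incidence : (incidence ℤ).map (algebraMap ℤ ℚ) = incidence ℚ := by
    ext v e
    exact map_incSign (algebraMap ℤ ℚ) v e
  have h := exists_map_mulVec_eq_zero_iff_of_isFractionRing (K := ℚ) (incidence ℤ)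
    (Subtype.val ⁻¹' S)
  rwa [map_incidence] at h

variable {d : ℕ} (b : Module.Basis (Fin d) ℤ (LinearMap.ker (boundary ℤ G)))

/-- The matrix whose rows are the cycles of the basis `b`, written in the coordinates given by the
edges. -/
noncomputable def cycleMatrix : Matrix (Fin d) G.edgeSet ℤ :=
  Matrix.of fun i => (b i : G.edgeSet → ℤ)

theorem vecMul_cycleMatrix (c : Fin d → ℤ) : c ᵥ* cycleMatrix b = b.equivFun.symm c := by
  rw [vecMul_eq_sum, b.equivFun_symm_apply, Submodule.coe_sum]
  rfl

theorem exists_vecMul_cycleMatrix_iff (p : (G.edgeSet → ℤ) → Prop) :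
    (∃ c ≠ 0, p (c ᵥ* cycleMatrix b)) ↔ ∃ z ≠ 0, boundary ℤ G z = 0 ∧ p z := by
  simp only [vecMul_cycleMatrix]
  constructor
  · rintro ⟨c, hc, hp⟩
    refine ⟨b.equivFun.symm c, ?_, (b.equivFun.symm c).2, hp⟩
    rwa [Ne, Submodule.coe_eq_zero, LinearEquiv.map_eq_zero_iff]
  · rintro ⟨z, hz, hker, hp⟩
    refine ⟨b.equivFun ⟨z, LinearMap.mem_ker.mpr hker⟩, ?_, by rwa [LinearEquiv.symm_apply_apply]⟩
    rwa [Ne, LinearEquiv.map_eq_zero_iff, Submodule.mk_eq_zero]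

theorem aeval_graphPoly {A : Type*} [CommRing A] [Algebra ℤ A] (w : Sym2 W → A) :
    MvPolynomial.aeval w (graphPoly G b) =
      (weightedGram ((cycleMatrix b).map (algebraMap ℤ A)) fun e => w e).det := by
  rw [graphPoly, AlgHom.map_det]
  congr 1
  ext i j
  simp [weightedGram_apply, cycleMatrix]

theorem graphPoly_restrict_zero_iff_h1_pos_general (S : Set (Sym2 W)) [DecidablePred (· ∈ S)] :
    MvPolynomial.aeval
        (fun e : Sym2 W => if e ∈ S then (0 : MvPolynomial (Sym2 W) ℤ) else MvPolynomial.X e)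
        (graphPoly G b) = 0 ↔
      0 < h1S G S := by
  rw [aeval_graphPoly, h1S_pos_iff_exists_ne_zero, exists_boundary_rat_eq_zero_iff_int,
    ← exists_vecMul_cycleMatrix_iff b fun z => ∀ e : G.edgeSet, ↑e ∉ S → z e = 0]
  exact det_weightedGram_restrict_eq_zero_iff (cycleMatrix b) Subtype.val S

end Cycles

/-- **Coordinate linear subspaces contained in the graph hypersurface correspond to
subgraphs with a cycle** (Proposition 3.1 of Bloch–Esnault–Kreimer): for a finite
connected simple graph `G` with graph polynomial `Ψ_Γ` and a set `S` of edges, the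
polynomial obtained from `Ψ_Γ` by substituting `A_e = 0` for all `e ∈ S` vanishes
identically if and only if `h_1(S) > 0`. -/
theorem graphPoly_restrict_zero_iff_h1_pos
    (G : SimpleGraph V) [Fintype G.edgeSet] (hG : G.Connected)
    {d : ℕ} (b : Module.Basis (Fin d) ℤ (LinearMap.ker (boundary ℤ G)))
    (S : Finset (Sym2 V)) (hS : (S : Set (Sym2 V)) ⊆ G.edgeSet) :
    MvPolynomial.aeval
        (fun e : Sym2 V =>
          if e ∈ S then (0 : MvPolynomial (Sym2 V) ℤ) else MvPolynomial.X e)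
        (graphPoly G b) = 0
      ↔ 0 < h1S G (S : Set (Sym2 V)) := by
  exact graphPoly_restrict_zero_iff_h1_pos_general b (S : Set (Sym2 V))
end

section
/- Let n ≥ 1 and let ℓ_1,…,ℓ_{2n} : ℝ^n → ℝ be linear functionals. For x = (x^{(1)},x^{(2)},x^{(3)},x^{(4)}) ∈ (ℝ^n)^4, identified with ℝ^{4n} carrying Lebesgue measure, set q_i(x) := ∑_{j=1}^{4} ℓ_i(x^{(j)})². Then the lower Lebesgue integral ∫⁻_{{x ∈ ℝ^{4n} : 1 ≤ ‖x‖ ≤ 2}} (∏_{i=1}^{2n} ENNReal.ofReal(q_i(x)))⁻¹ dx is finite if and only if for every nonempty subset I ⊆ {1,…,2n} with ⋂_{i∈I} ker ℓ_i ≠ {0} one has #I < 2·(n − dim_ℝ ⋂_{i∈I} ker ℓ_i). -/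
open MeasureTheory

/-!
Both directions are local. Near a point `x₀` only the quadrics `q i`, `i ∈ I`, vanishing at `x₀`
matter, and `x₀` being nonzero makes the common kernel of the forms `ℓ i` nonzero.

*Divergence.* Let `W` be the common zero locus of the `q i` and `c` the codimension of `W`. The
dilation by `ε` transverse to `W` has determinant `ε ^ c` and multiplies `∏ i ∈ I, q i` by
`ε ^ (2 * #I)`. If `c ≤ 2 * #I`, the integral of the reciprocal therefore does not decrease as a
neighbourhood is squeezed into ever thinner neighbourhoods of `W`, so it is infinite.

*Convergence.* If every `J ⊆ I` satisfies `#J ≤ s * rank J`, a basis `B ⊆ I` chosen greedily among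
the smallest `q i` gives `∏ i ∈ I, (q i)⁻¹ ≤ ∏ b ∈ B, q b ^ (-s)`. For `d` copies of the space and
`s < d / 2`, each factor is at most the product over the copies of `|ℓ b (x j)| ^ (-2 * s / d)`, and
the forms `ℓ b` are part of a coordinate system, so this is a product of integrable functions of
one variable.
-/

open Filter Topology Module Submodule

section LinearAlgebra

variable {K V ι : Type*}

lemma finrank_span_image_eq_card [DivisionRing K] [AddCommGroup V] [Module K V] {v : ι → V}
    {B : Finset ι} (hB : LinearIndepOn K v (B : Set ι)) :
    finrank K (span K (v '' (B : Set ι))) = B.card := by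
  rw [Set.image_eq_range]
  simpa using finrank_span_eq_card hB.linearIndependent

lemma exists_linearIndepOn_between_insert [DecidableEq ι] [DivisionRing K] [AddCommGroup V]
    [Module K V] {v : ι → V} {B I : Finset ι} (hB : LinearIndepOn K v (B : Set ι))
    (hspan : span K (v '' (B : Set ι)) = span K (v '' (I : Set ι))) (m : ι) :
    ∃ B' : Finset ι, B ⊆ B' ∧ B' ⊆ insert m B ∧ LinearIndepOn K v (B' : Set ι) ∧
      span K (v '' (B' : Set ι)) = span K (v '' ((insert m I : Finset ι) : Set ι)) := by
  obtain ⟨b, hbm, hBb, hsub, hb⟩ := exists_linearIndepOn_extension hB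
    (Finset.coe_subset.2 (Finset.subset_insert m B))
  lift b to Finset ι using (Finset.finite_toSet _).subset hbm
  refine ⟨b, by exact_mod_cast hBb, by exact_mod_cast hbm, hb, ?_⟩
  rw [le_antisymm (span_mono (Set.image_mono hbm)) (span_le.2 hsub)]
  simp only [Finset.coe_insert, Set.image_insert_eq, span_insert, hspan]

/- The basis is built greedily in order of decreasing weight. Subtracting the least weight `a m`
from all weights kills the contribution of `m`, and the rank hypothesis for the whole of `I` pays
for adding `a m` back. -/
lemma exists_linearIndepOn_sum_le_mul_sum [DivisionRing K] [AddCommGroup V]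
    [Module K V] {v : ι → V} {s : ℝ} {I : Finset ι}
    (hcard : ∀ J ⊆ I, (J.card : ℝ) ≤ s * finrank K (span K (v '' (J : Set ι))))
    {a : ι → ℝ} (ha : ∀ i ∈ I, 0 ≤ a i) :
    ∃ B ⊆ I, LinearIndepOn K v (B : Set ι) ∧
      span K (v '' (B : Set ι)) = span K (v '' (I : Set ι)) ∧
      ∑ i ∈ I, a i ≤ s * ∑ b ∈ B, a b := by
  classical
  induction hn : I.card generalizing I a with
  | zero =>
    obtain rfl := Finset.card_eq_zero.1 hn
    exact ⟨∅, subset_rfl, by simp, rfl, by simp⟩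
  | succ n ih =>
    obtain ⟨m, hm, hmin⟩ := I.exists_min_image a (Finset.card_pos.1 (by lia))
    have hIm : insert m (I.erase m) = I := Finset.insert_erase hm
    obtain ⟨B, hBI, hB, hspan, hle⟩ := ih (fun J hJ => hcard J (hJ.trans (I.erase_subset m)))
      (a := fun i => a i - a m)
      (fun i hi => sub_nonneg.2 (hmin i (Finset.mem_of_mem_erase hi)))
      (by rw [Finset.card_erase_of_mem hm, hn, Nat.add_sub_cancel])
    obtain ⟨B', hBB', hB'm, hB', hspan'⟩ := exists_linearIndepOn_between_insert hB hspan m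
    rw [hIm] at hspan'
    refine ⟨B', hB'm.trans (hIm ▸ Finset.insert_subset_insert m hBI), hB', hspan', ?_⟩
    have hI : ∑ i ∈ I.erase m, (a i - a m) = ∑ i ∈ I, (a i - a m) :=
      Finset.sum_erase _ (sub_self _)
    have hBsum : ∑ b ∈ B, (a b - a m) = ∑ b ∈ B', (a b - a m) := by
      refine Finset.sum_subset hBB' fun b hb hbB => ?_
      rw [(Finset.mem_insert.1 (hB'm hb)).resolve_right hbB, sub_self]
    have hrank : (I.card : ℝ) ≤ s * B'.card := by
      rw [← finrank_span_image_eq_card hB', hspan']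
      exact hcard I subset_rfl
    rw [hI, hBsum] at hle
    simp only [Finset.sum_sub_distrib, Finset.sum_const, nsmul_eq_mul] at hle
    linarith [mul_le_mul_of_nonneg_right hrank (ha m hm)]

lemma exists_linearIndepOn_inv_prod_le_prod_rpow [DivisionRing K] [AddCommGroup V]
    [Module K V] {v : ι → V} {s : ℝ} {I : Finset ι}
    (hcard : ∀ J ⊆ I, (J.card : ℝ) ≤ s * finrank K (span K (v '' (J : Set ι))))
    {u : ι → ℝ} (hu₀ : ∀ i ∈ I, 0 < u i) (hu₁ : ∀ i ∈ I, u i ≤ 1) :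
    ∃ B ⊆ I, LinearIndepOn K v (B : Set ι) ∧ (∏ i ∈ I, u i)⁻¹ ≤ ∏ b ∈ B, u b ^ (-s) := by
  obtain ⟨B, hBI, hB, -, hle⟩ := exists_linearIndepOn_sum_le_mul_sum hcard
    (a := fun i => -Real.log (u i))
    (fun i hi => neg_nonneg.2 (Real.log_nonpos (hu₀ i hi).le (hu₁ i hi)))
  refine ⟨B, hBI, hB, ?_⟩
  calc (∏ i ∈ I, u i)⁻¹ = Real.exp (∑ i ∈ I, -Real.log (u i)) := by
        rw [Real.exp_sum, ← Finset.prod_inv_distrib]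
        exact Finset.prod_congr rfl fun i hi => by rw [Real.exp_neg, Real.exp_log (hu₀ i hi)]
    _ ≤ Real.exp (s * ∑ b ∈ B, -Real.log (u b)) := Real.exp_le_exp.2 hle
    _ = ∏ b ∈ B, u b ^ (-s) := by
        rw [Finset.mul_sum, Real.exp_sum]
        refine Finset.prod_congr rfl fun b hb => ?_
        rw [Real.rpow_def_of_pos (hu₀ b (hBI hb)), mul_neg, mul_neg, mul_comm]

variable [Field K] [AddCommGroup V] [Module K V]

lemma finrank_span_image_add_finrank_iInf_ker [FiniteDimensional K V] (ℓ : ι → V →ₗ[K] K)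
    (I : Finset ι) :
    finrank K (span K (ℓ '' (I : Set ι))) + finrank K ↥(⨅ i ∈ I, LinearMap.ker (ℓ i)) =
      finrank K V := by
  have hker : (span K (ℓ '' (I : Set ι)) : Submodule K (Dual K V)).dualCoannihilator =
      ⨅ i ∈ I, LinearMap.ker (ℓ i) := by
    refine SetLike.coe_injective ?_
    rw [coe_dualCoannihilator_span]
    ext x
    simp
  rw [← hker]
  exact Subspace.finrank_add_finrank_dualCoannihilator_eq _

lemma finrank_pi_univ_const {κ : Type*} [Fintype κ] [FiniteDimensional K V] (W : Submodule K V) :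
    finrank K (Submodule.pi (Set.univ : Set κ) fun _ => W) = Fintype.card κ * finrank K W := by
  have hrange := W.subtype.range_compLeft κ
  rw [range_subtype] at hrange
  rw [← hrange, LinearMap.finrank_range_of_inj
    (Function.Injective.comp_left (g := W.subtype) W.subtype_injective), finrank_pi_fintype]
  simp

lemma exists_basis_coord_inl_eq [FiniteDimensional K V] {ℓ : ι → V →ₗ[K] K}
    (hℓ : LinearIndependent K ℓ) :
    ∃ (ι' : Set (Dual K V)) (b : Basis (ι ⊕ ι') K V), ∀ i, b.coord (Sum.inl i) = ℓ i := by
  classical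
  let c : Basis (ι ⊕ Basis.sumExtendIndex hℓ) K (Dual K V) := Basis.sumExtend hℓ
  have hc (i : ι) : c (Sum.inl i) = ℓ i := by
    simp only [c, Basis.sumExtend, Basis.reindex_apply, Basis.extend_apply_self]
    rfl
  have := Module.Finite.finite_basis c
  refine ⟨_, c.dualBasis.map (evalEquiv K V).symm, fun i => LinearMap.ext fun x => ?_⟩
  rw [Basis.coord_apply, Basis.map_repr]
  simp [hc]

/-- The endomorphism of `V = W ⊕ W'` that fixes `W` pointwise and multiplies `W'` by `c`; as
`c → 0` it contracts `V` onto `W`. -/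
noncomputable def dilationOfIsCompl {W W' : Submodule K V} (h : IsCompl W W') (c : K) : V →ₗ[K] V :=
  W.projection W' h + c • W'.projection W h.symm

lemma dilationOfIsCompl_apply {W W' : Submodule K V} (h : IsCompl W W') (c : K) (v : V) :
    dilationOfIsCompl h c v = c • v + (1 - c) • W.projection W' h v := by
  nth_rw 2 [← projection_add_projection_eq_self h v]
  simp only [dilationOfIsCompl, LinearMap.add_apply, LinearMap.smul_apply]
  module

lemma map_dilationOfIsCompl {W W' : Submodule K V} (h : IsCompl W W') {φ : V →ₗ[K] K}
    (hφ : W ≤ LinearMap.ker φ) (c : K) (v : V) : φ (dilationOfIsCompl h c v) = c * φ v := by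
  have hv : φ (W.projection W' h v) = 0 := hφ (projection_apply_mem h v)
  simp [dilationOfIsCompl_apply, hv]

lemma det_dilationOfIsCompl [FiniteDimensional K V] {W W' : Submodule K V} (h : IsCompl W W')
    (c : K) : (dilationOfIsCompl h c).det = c ^ finrank K W' := by
  have hconj : dilationOfIsCompl h c = (prodEquivOfIsCompl W W' h).toLinearMap ∘ₗ
      (LinearMap.prodMap LinearMap.id (c • LinearMap.id)) ∘ₗ
        (prodEquivOfIsCompl W W' h).symm.toLinearMap := by
    ext x
    simp [dilationOfIsCompl]
  rw [hconj, LinearMap.det_conj, LinearMap.det_prodMap]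
  simp

end LinearAlgebra

section LocalIntegrability

variable {ι κ : Type*} [Fintype ι] [Fintype κ]

lemma locallyIntegrable_abs_rpow_neg {p : ℝ} (hp : p < 1) :
    LocallyIntegrable fun t : ℝ => |t| ^ (-p) := by
  refine locallyIntegrable_of_norm_le_rpow (C := 1) (α := p) (by simp) (by simpa using hp) ?_ ?_
  · filter_upwards with t
    rw [one_mul, Real.norm_of_nonneg (by positivity), Real.norm_eq_abs]
  · exact (measurable_id.abs.pow_const _).aestronglyMeasurable

lemma locallyIntegrable_prod_comp_eval {E : ι → Type*} [∀ i, TopologicalSpace (E i)]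
    [∀ i, MeasurableSpace (E i)] {μ : ∀ i, Measure (E i)} [∀ i, SigmaFinite (μ i)]
    {f : ∀ i, E i → ℝ} (hf : ∀ i, LocallyIntegrable (f i) (μ i)) :
    LocallyIntegrable (fun x => ∏ i, f i (x i)) (Measure.pi μ) := by
  intro x
  choose U hU hfU using fun i => hf i (x i)
  refine ⟨Set.univ.pi U, set_pi_mem_nhds Set.finite_univ fun i _ => hU i, ?_⟩
  rw [IntegrableOn, Measure.restrict_pi_pi]
  exact Integrable.fintype_prod_dep hfU

lemma locallyIntegrable_of_isAddHaarMeasure {G F : Type*} [AddGroup G] [TopologicalSpace G]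
    [IsTopologicalAddGroup G] [LocallyCompactSpace G] [SecondCountableTopology G]
    [MeasurableSpace G] [BorelSpace G] [NormedAddCommGroup F] {ν : Measure G}
    [ν.IsAddHaarMeasure] {f : G → F} (hf : LocallyIntegrable f ν) (μ : Measure G)
    [μ.IsAddHaarMeasure] : LocallyIntegrable f μ := by
  intro x
  obtain ⟨U, hU, hfU⟩ := hf x
  refine ⟨U, hU, ?_⟩
  rw [IntegrableOn, Measure.isAddLeftInvariant_eq_smul μ ν, Measure.restrict_smul]
  exact hfU.smul_measure_nnreal

variable {V : Type*} [NormedAddCommGroup V] [NormedSpace ℝ V] [FiniteDimensional ℝ V]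
  [MeasurableSpace V] [BorelSpace V] (μ : Measure V) [μ.IsAddHaarMeasure]

lemma locallyIntegrable_prod_abs_rpow_neg {ℓ : ι → V →ₗ[ℝ] ℝ} (hℓ : LinearIndependent ℝ ℓ)
    {p : ℝ} (hp : p < 1) : LocallyIntegrable (fun v => ∏ i, |ℓ i v| ^ (-p)) μ := by
  obtain ⟨ι', b, hb⟩ := exists_basis_coord_inl_eq hℓ
  have := Module.Finite.finite_basis b
  have : Finite ι' := Finite.of_injective (Sum.inr : ι' → ι ⊕ ι') Sum.inr_injective
  have := Fintype.ofFinite ι'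
  let f : ι ⊕ ι' → ℝ → ℝ := Sum.elim (fun _ t => |t| ^ (-p)) fun _ _ => 1
  have hf : LocallyIntegrable (fun x => ∏ k, f k (x k)) (volume : Measure (ι ⊕ ι' → ℝ)) := by
    refine locallyIntegrable_prod_comp_eval fun k => ?_
    rcases k with _ | _
    · exact locallyIntegrable_abs_rpow_neg hp
    · exact locallyIntegrable_const 1
  have := b.equivFunL.isAddHaarMeasure_map μ
  have hmap := (locallyIntegrable_map_homeomorph b.equivFunL.toHomeomorph).1
    (locallyIntegrable_of_isAddHaarMeasure hf (μ.map b.equivFunL))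
  simpa [f, Function.comp_def, Fintype.prod_sum_type, ← hb] using hmap

lemma locallyIntegrable_prod_prod_abs_rpow_neg {ℓ : ι → V →ₗ[ℝ] ℝ}
    (hℓ : LinearIndependent ℝ ℓ) {p : ℝ} (hp : p < 1) :
    LocallyIntegrable (fun x : κ → V => ∏ j, ∏ i, |ℓ i (x j)| ^ (-p))
      (Measure.pi fun _ => μ) :=
  locallyIntegrable_prod_comp_eval fun _ => locallyIntegrable_prod_abs_rpow_neg μ hℓ hp

lemma ae_ne_zero_of_linearMap_ne_zero {φ : V →ₗ[ℝ] ℝ} (hφ : φ ≠ 0) : ∀ᵐ v ∂μ, φ v ≠ 0 := by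
  rw [ae_iff]
  simp only [not_not]
  exact Measure.addHaar_submodule μ (LinearMap.ker φ) (by rwa [ne_eq, LinearMap.ker_eq_top])

lemma sum_sq_rpow_neg_le_prod_abs_rpow_neg [Nonempty κ] {z : κ → ℝ} (hz : ∀ j, z j ≠ 0) {s : ℝ}
    (hs : 0 ≤ s) : (∑ j, z j ^ 2) ^ (-s) ≤ ∏ j, |z j| ^ (-(2 * s / Fintype.card κ)) := by
  set d : ℝ := (Fintype.card κ : ℝ)
  have hd : 0 < d := by simp [d, Fintype.card_pos]
  have hpos (j : κ) : 0 < |z j| := abs_pos.2 (hz j)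
  calc (∑ j, z j ^ 2) ^ (-s) = ∏ _j : κ, (∑ j, z j ^ 2) ^ (-(s / d)) := by
        rw [Finset.prod_const, Finset.card_univ, ← Real.rpow_mul_natCast (by positivity)]
        congr 1
        field_simp
        ring
    _ ≤ ∏ j, (|z j| ^ 2) ^ (-(s / d)) := by
        refine Finset.prod_le_prod (fun _ _ => by positivity) fun j _ => ?_
        refine Real.rpow_le_rpow_of_nonpos (pow_pos (hpos j) 2) ?_
          (neg_nonpos.2 (by positivity))
        rw [sq_abs]
        exact Finset.single_le_sum (f := fun j => z j ^ 2) (fun _ _ => sq_nonneg _)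
          (Finset.mem_univ j)
    _ = ∏ j, |z j| ^ (-(2 * s / d)) := by
        refine Finset.prod_congr rfl fun j _ => ?_
        rw [← Real.rpow_natCast_mul (hpos j).le]
        congr 1
        push_cast
        ring

end LocalIntegrability

section SetLIntegral

lemma exists_mem_nhds_setLIntegral_mul_lt_top {X : Type*} [TopologicalSpace X]
    [MeasurableSpace X] [OpensMeasurableSpace X] {ν : Measure X} {f g : X → ENNReal} {x₀ : X}
    (hf : ∃ U ∈ 𝓝 x₀, ∫⁻ x in U, f x ∂ν < ⊤) (hg : ContinuousAt g x₀) (hg_top : g x₀ ≠ ⊤) :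
    ∃ U ∈ 𝓝 x₀, ∫⁻ x in U, f x * g x ∂ν < ⊤ := by
  obtain ⟨U, hU, hfU⟩ := hf
  obtain ⟨c, hc, hc_top⟩ := exists_between hg_top.lt_top
  obtain ⟨O, hO, hOopen, hx₀⟩ := mem_nhds_iff.1 (inter_mem hU (hg.eventually_lt_const hc))
  refine ⟨O, hOopen.mem_nhds hx₀, ?_⟩
  calc ∫⁻ x in O, f x * g x ∂ν ≤ ∫⁻ x in O, f x * c ∂ν :=
        setLIntegral_mono' hOopen.measurableSet fun x hx => by gcongr; exact (hO hx).2.le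
    _ = (∫⁻ x in O, f x ∂ν) * c := lintegral_mul_const' _ _ hc_top.ne
    _ < ⊤ := ENNReal.mul_lt_top
        ((lintegral_mono_set fun x hx => (hO hx).1).trans_lt hfU) hc_top

lemma setLIntegral_mul_eq_top_of_forall_mem_nhds {X : Type*} [TopologicalSpace X]
    [MeasurableSpace X] [OpensMeasurableSpace X] {ν : Measure X} {f g : X → ENNReal} {x₀ : X}
    (hf : ∀ U ∈ 𝓝 x₀, ∫⁻ x in U, f x ∂ν = ⊤) (hg : ContinuousAt g x₀) (hg₀ : g x₀ ≠ 0)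
    {A : Set X} (hA : A ∈ 𝓝 x₀) : ∫⁻ x in A, f x * g x ∂ν = ⊤ := by
  obtain ⟨c, hc₀, hc⟩ := exists_between hg₀.bot_lt
  obtain ⟨O, hO, hOopen, hx₀⟩ := mem_nhds_iff.1 (inter_mem hA (hg.eventually_const_lt hc))
  have hcg : ∫⁻ x in O, f x * c ∂ν = ⊤ := by
    rw [lintegral_mul_const' _ _ hc.ne_top, hf O (hOopen.mem_nhds hx₀), ENNReal.top_mul hc₀.ne']
  refine top_unique ?_
  calc ⊤ = ∫⁻ x in O, f x * c ∂ν := hcg.symm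
    _ ≤ ∫⁻ x in O, f x * g x ∂ν :=
        setLIntegral_mono' hOopen.measurableSet fun x hx => by gcongr; exact (hO hx).2.le
    _ ≤ ∫⁻ x in A, f x * g x ∂ν := lintegral_mono_set fun x hx => (hO hx).1

/- If the integral over `U` were finite, the integrals over the images `D a '' N ⊆ U`, whose
measures tend to zero, would tend to zero; but each is at least the integral over `N`. -/
lemma setLIntegral_eq_top_of_le_abs_det_mul {E α : Type*} [NormedAddCommGroup E]
    [NormedSpace ℝ E] [FiniteDimensional ℝ E] [MeasurableSpace E] [BorelSpace E] {μ : Measure E}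
    [μ.IsAddHaarMeasure] {l : Filter α} [l.NeBot] {D : α → E →ₗ[ℝ] E} {N U : Set E}
    {g : E → ENNReal} (hdet : Tendsto (fun a => (D a).det) l (𝓝[≠] 0))
    (hmaps : ∀ᶠ a in l, Set.MapsTo (D a) N U)
    (hg : ∀ᶠ a in l, ∀ x ∈ N, g x ≤ ENNReal.ofReal |(D a).det| * g (D a x))
    (hN : MeasurableSet N) (hμN : μ N ≠ ⊤) (hpos : ∫⁻ x in N, g x ∂μ ≠ 0) :
    ∫⁻ x in U, g x ∂μ = ⊤ := by
  by_contra hfin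
  have hdet₀ : Tendsto (fun a => ENNReal.ofReal |(D a).det|) l (𝓝 0) := by
    simpa using ENNReal.tendsto_ofReal (hdet.mono_right nhdsWithin_le_nhds).abs
  have hvol : Tendsto (fun a => μ.restrict U (D a '' N)) l (𝓝 0) := by
    refine tendsto_of_tendsto_of_tendsto_of_le_of_le tendsto_const_nhds
      (by simpa using ENNReal.Tendsto.mul_const hdet₀ (Or.inr hμN)) (fun _ => zero_le)
      fun a => ?_
    rw [← Measure.addHaar_image_linearMap]
    exact Measure.restrict_apply_le _ _
  refine hpos (le_antisymm (ge_of_tendsto (tendsto_setLIntegral_zero hfin hvol) ?_) zero_le)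
  filter_upwards [hmaps, hg, hdet.eventually self_mem_nhdsWithin] with a hmaps_a hg_a hdet_a
  have hinj : Function.Injective (D a) :=
    (LinearMap.equivOfDetNeZero (D a) hdet_a).injective
  rw [Measure.restrict_restrict_of_subset hmaps_a.image_subset,
    lintegral_image_eq_lintegral_abs_det_fderiv_mul μ hN
      (f := D a) (f' := fun _ => LinearMap.toContinuousLinearMap (D a))
      (fun x _ => (LinearMap.toContinuousLinearMap (D a)).hasFDerivWithinAt) hinj.injOn]
  exact setLIntegral_mono' hN hg_a

lemma setLIntegral_eq_top_of_le_pow_mul_dilation {E : Type*} [NormedAddCommGroup E]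
    [NormedSpace ℝ E] [FiniteDimensional ℝ E] [MeasurableSpace E] [BorelSpace E] (μ : Measure E)
    [μ.IsAddHaarMeasure] {W W' : Submodule ℝ E} (h : IsCompl W W') (hW' : finrank ℝ W' ≠ 0)
    {g : E → ENNReal} (hg_meas : Measurable g) (hg₀ : ∀ x, g x ≠ 0)
    (hg : ∀ c ∈ Set.Ioc (0 : ℝ) 1, ∀ x,
      g x ≤ ENNReal.ofReal (c ^ finrank ℝ W') * g (dilationOfIsCompl h c x))
    {x₀ : E} (hx₀ : x₀ ∈ W) {A : Set E} (hA : A ∈ 𝓝 x₀) : ∫⁻ x in A, g x ∂μ = ⊤ := by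
  obtain ⟨r, hr, hrA⟩ := Metric.mem_nhds_iff.1 hA
  set P : E →ₗ[ℝ] E := W.projection W' h
  have hPx₀ : P x₀ = x₀ := projection_apply_of_mem_left h hx₀
  set N : Set E := Metric.ball x₀ r ∩ P ⁻¹' Metric.ball x₀ r
  have hN : IsOpen N :=
    Metric.isOpen_ball.inter (Metric.isOpen_ball.preimage P.continuous_of_finiteDimensional)
  have hNpos : ∫⁻ x in N, g x ∂μ ≠ 0 := by
    refine ((setLIntegral_pos_iff hg_meas).2 ?_).ne'
    rw [Function.support_eq_univ hg₀, Set.univ_inter]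
    exact hN.measure_pos μ ⟨x₀, by simp [N, hr, hPx₀]⟩
  have hIoc : ∀ᶠ c : ℝ in 𝓝[>] 0, c ∈ Set.Ioc 0 1 := Ioc_mem_nhdsGT one_pos
  have hdet : Tendsto (fun c : ℝ => (dilationOfIsCompl h c).det) (𝓝[>] 0) (𝓝[≠] 0) := by
    simp only [det_dilationOfIsCompl]
    refine tendsto_nhdsWithin_iff.2 ⟨?_, hIoc.mono fun c hc => pow_ne_zero _ hc.1.ne'⟩
    exact ((continuous_pow _).tendsto' (0 : ℝ) 0 (zero_pow hW')).mono_left nhdsWithin_le_nhds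
  have hmaps : ∀ᶠ c : ℝ in 𝓝[>] 0, Set.MapsTo (dilationOfIsCompl h c) N A := by
    filter_upwards [hIoc] with c hc x hx
    rw [dilationOfIsCompl_apply]
    exact hrA ((convex_ball x₀ r) hx.1 hx.2 hc.1.le (sub_nonneg.2 hc.2) (add_sub_cancel c 1))
  refine setLIntegral_eq_top_of_le_abs_det_mul hdet hmaps ?_ hN.measurableSet
    (measure_ne_top_of_subset Set.inter_subset_left measure_ball_lt_top.ne) hNpos
  filter_upwards [hIoc] with c hc x _
  rw [det_dilationOfIsCompl, abs_of_nonneg (pow_nonneg hc.1.le _)]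
  exact hg c hc x

end SetLIntegral

section FeynmanQuadric

variable {V ι κ : Type*} [Fintype κ]

section Algebra

variable [AddCommGroup V] [Module ℝ V]

/-- The Feynman quadric `x ↦ ∑ j, φ (x j) ^ 2` of a linear form `φ`, on a product of copies of `V`
indexed by `κ`. -/
def feynmanQuadric (φ : V →ₗ[ℝ] ℝ) (x : κ → V) : ℝ :=
  ∑ j, φ (x j) ^ 2

/-- The reciprocal of the product of the Feynman quadrics of the linear forms `ℓ i`, `i ∈ I`. It
takes the value `⊤` where one of these quadrics vanishes. -/
noncomputable def feynmanDensity (ℓ : ι → V →ₗ[ℝ] ℝ) (I : Finset ι) (x : κ → V) : ENNReal :=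
  (∏ i ∈ I, ENNReal.ofReal (feynmanQuadric (ℓ i) x))⁻¹

lemma feynmanQuadric_nonneg (φ : V →ₗ[ℝ] ℝ) (x : κ → V) : 0 ≤ feynmanQuadric φ x :=
  Finset.sum_nonneg fun _ _ => sq_nonneg _

lemma feynmanQuadric_eq_zero_iff {φ : V →ₗ[ℝ] ℝ} {x : κ → V} :
    feynmanQuadric φ x = 0 ↔ ∀ j, φ (x j) = 0 := by
  simp [feynmanQuadric, Finset.sum_eq_zero_iff_of_nonneg, sq_nonneg]

lemma feynmanQuadric_eq_sq_mul {φ : V →ₗ[ℝ] ℝ} {x y : κ → V} {c : ℝ}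
    (h : ∀ j, φ (y j) = c * φ (x j)) : feynmanQuadric φ y = c ^ 2 * feynmanQuadric φ x := by
  simp only [feynmanQuadric, h, mul_pow, Finset.mul_sum]

variable {ℓ : ι → V →ₗ[ℝ] ℝ} {I : Finset ι} {x : κ → V}

lemma feynmanDensity_eq_inv_ofReal_prod :
    feynmanDensity ℓ I x = (ENNReal.ofReal (∏ i ∈ I, feynmanQuadric (ℓ i) x))⁻¹ := by
  rw [feynmanDensity, ENNReal.ofReal_prod_of_nonneg fun i _ => feynmanQuadric_nonneg (ℓ i) x]

lemma feynmanDensity_ne_zero : feynmanDensity ℓ I x ≠ 0 := by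
  rw [feynmanDensity_eq_inv_ofReal_prod]
  exact ENNReal.inv_ne_zero.2 ENNReal.ofReal_ne_top

lemma feynmanDensity_eq_top_iff :
    feynmanDensity ℓ I x = ⊤ ↔ ∃ i ∈ I, feynmanQuadric (ℓ i) x = 0 := by
  simp only [feynmanDensity, ENNReal.inv_eq_top, Finset.prod_eq_zero_iff, ENNReal.ofReal_eq_zero,
    (feynmanQuadric_nonneg _ _).ge_iff_eq']

lemma feynmanDensity_univ_eq_mul_compl [Fintype ι] [DecidableEq ι] :
    feynmanDensity ℓ Finset.univ x = feynmanDensity ℓ I x * feynmanDensity ℓ Iᶜ x := by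
  have htop (J : Finset ι) : ∏ i ∈ J, ENNReal.ofReal (feynmanQuadric (ℓ i) x) ≠ ⊤ :=
    ENNReal.prod_ne_top fun _ _ => ENNReal.ofReal_ne_top
  rw [feynmanDensity, feynmanDensity, feynmanDensity, ← Finset.prod_mul_prod_compl I,
    ENNReal.mul_inv (Or.inr (htop _)) (Or.inl (htop _))]

lemma feynmanDensity_eq_ofReal_mul {y : κ → V} {c : ℝ} (hc : 0 < c)
    (h : ∀ i ∈ I, ∀ j, ℓ i (y j) = c * ℓ i (x j)) :
    feynmanDensity ℓ I x = ENNReal.ofReal (c ^ (2 * I.card)) * feynmanDensity ℓ I y := by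
  have hpos : 0 < c ^ (2 * I.card) := by positivity
  have hprod : ∏ i ∈ I, feynmanQuadric (ℓ i) y =
      c ^ (2 * I.card) * ∏ i ∈ I, feynmanQuadric (ℓ i) x := by
    rw [Finset.prod_congr rfl fun i hi => feynmanQuadric_eq_sq_mul (h i hi),
      Finset.prod_mul_distrib, Finset.prod_const, ← pow_mul]
  rw [feynmanDensity_eq_inv_ofReal_prod, feynmanDensity_eq_inv_ofReal_prod, hprod,
    ENNReal.ofReal_mul hpos.le,
    ENNReal.mul_inv (Or.inr ENNReal.ofReal_ne_top) (Or.inl ENNReal.ofReal_ne_top), ← mul_assoc,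
    ENNReal.mul_inv_cancel (ENNReal.ofReal_pos.2 hpos).ne' ENNReal.ofReal_ne_top, one_mul]

open Classical in
/-- A majorant of the Feynman density that is a sum of monomials of exponent `-p` in each
coordinate, one for each linearly independent subfamily of `(ℓ i)_{i ∈ I}`. -/
noncomputable def monomialMajorant (ℓ : ι → V →ₗ[ℝ] ℝ) (I : Finset ι) (p : ℝ) (x : κ → V) : ℝ :=
  ∑ B ∈ I.powerset.filter fun B : Finset ι => LinearIndepOn ℝ ℓ (B : Set ι),
    ∏ j, ∏ b ∈ B, |ℓ b (x j)| ^ (-p)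

lemma feynmanDensity_le_ofReal_monomialMajorant [Nonempty κ] {s : ℝ} (hs : 0 ≤ s)
    (hcard : ∀ J ⊆ I, (J.card : ℝ) ≤ s * finrank ℝ (span ℝ (ℓ '' (J : Set ι))))
    (hx : ∀ i ∈ I, ∀ j, ℓ i (x j) ≠ 0) (hx₁ : ∀ i ∈ I, feynmanQuadric (ℓ i) x ≤ 1) :
    feynmanDensity ℓ I x ≤
      ENNReal.ofReal (monomialMajorant ℓ I (2 * s / Fintype.card κ) x) := by
  classical
  have hpos (i : ι) (hi : i ∈ I) : 0 < feynmanQuadric (ℓ i) x :=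
    (feynmanQuadric_nonneg _ _).lt_of_ne' fun h =>
      hx i hi (Classical.arbitrary κ) (feynmanQuadric_eq_zero_iff.1 h _)
  obtain ⟨B, hBI, hB, hle⟩ := exists_linearIndepOn_inv_prod_le_prod_rpow hcard hpos hx₁
  rw [feynmanDensity_eq_inv_ofReal_prod, ← ENNReal.ofReal_inv_of_pos (Finset.prod_pos hpos)]
  refine ENNReal.ofReal_le_ofReal (hle.trans ?_)
  calc ∏ b ∈ B, feynmanQuadric (ℓ b) x ^ (-s)
      ≤ ∏ b ∈ B, ∏ j, |ℓ b (x j)| ^ (-(2 * s / Fintype.card κ)) :=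
        Finset.prod_le_prod (fun b _ => Real.rpow_nonneg (feynmanQuadric_nonneg _ _) _)
          fun b hb => sum_sq_rpow_neg_le_prod_abs_rpow_neg (hx b (hBI hb)) hs
    _ = ∏ j, ∏ b ∈ B, |ℓ b (x j)| ^ (-(2 * s / Fintype.card κ)) := Finset.prod_comm
    _ ≤ monomialMajorant ℓ I (2 * s / Fintype.card κ) x :=
        Finset.single_le_sum
          (f := fun B => ∏ j, ∏ b ∈ B, |ℓ b (x j)| ^ (-(2 * s / Fintype.card κ)))
          (fun _ _ => by positivity) (by simp [hBI, hB])

end Algebra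

section Continuity

variable [NormedAddCommGroup V] [NormedSpace ℝ V] [FiniteDimensional ℝ V]

lemma continuous_feynmanQuadric (φ : V →ₗ[ℝ] ℝ) :
    Continuous (feynmanQuadric φ : (κ → V) → ℝ) := by
  have := φ.continuous_of_finiteDimensional
  unfold feynmanQuadric
  fun_prop

lemma continuous_feynmanDensity (ℓ : ι → V →ₗ[ℝ] ℝ) (I : Finset ι) :
    Continuous (feynmanDensity ℓ I : (κ → V) → ENNReal) := by
  have hprod : Continuous fun x : κ → V => ∏ i ∈ I, feynmanQuadric (ℓ i) x :=
    continuous_finsetProd I fun i _ => continuous_feynmanQuadric (ℓ i)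
  exact (ENNReal.continuous_ofReal.comp hprod).inv.congr fun _ =>
    feynmanDensity_eq_inv_ofReal_prod.symm

end Continuity

section Convergence

variable [NormedAddCommGroup V] [NormedSpace ℝ V] [FiniteDimensional ℝ V] [MeasurableSpace V]
  [BorelSpace V] (μ : Measure V) [μ.IsAddHaarMeasure] {ℓ : ι → V →ₗ[ℝ] ℝ}

lemma locallyIntegrable_monomialMajorant (I : Finset ι) {p : ℝ} (hp : p < 1) :
    LocallyIntegrable (monomialMajorant ℓ I p : (κ → V) → ℝ) (Measure.pi fun _ => μ) := by
  classical
  unfold monomialMajorant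
  refine locallyIntegrable_finsetSum _ fun B hB => ?_
  have hindep : LinearIndependent ℝ fun b : B => ℓ b := (Finset.mem_filter.1 hB).2
  simp only [← Finset.prod_coe_sort B]
  exact locallyIntegrable_prod_prod_abs_rpow_neg μ hindep hp

lemma ae_forall_ne_zero {I : Finset ι} (hℓ : ∀ i ∈ I, ℓ i ≠ 0) :
    ∀ᵐ x : κ → V ∂Measure.pi fun _ => μ, ∀ i ∈ I, ∀ j, ℓ i (x j) ≠ 0 := by
  refine (Finset.eventually_all I).2 fun i hi => eventually_all.2 fun j => ?_
  exact (Measure.quasiMeasurePreserving_eval (fun _ : κ => μ) j).ae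
    (ae_ne_zero_of_linearMap_ne_zero μ (hℓ i hi))

lemma exists_lt_forall_card_le_mul_finrank {W : Type*} [AddCommGroup W] [Module ℝ W] {v : ι → W}
    {I : Finset ι} {d : ℝ} (hd : 0 < d)
    (h : ∀ J ⊆ I, J.Nonempty → (J.card : ℝ) < d * finrank ℝ (span ℝ (v '' (J : Set ι)))) :
    ∃ s, 0 ≤ s ∧ s < d ∧
      ∀ J ⊆ I, (J.card : ℝ) ≤ s * finrank ℝ (span ℝ (v '' (J : Set ι))) := by
  have hev : ∀ᶠ s in 𝓝[<] d, ∀ J ∈ I.powerset,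
      (J.card : ℝ) ≤ s * finrank ℝ (span ℝ (v '' (J : Set ι))) := by
    refine (Finset.eventually_all _).2 fun J hJ => ?_
    rcases J.eq_empty_or_nonempty with rfl | hJne
    · exact .of_forall fun s => by simp [finrank_span_image_eq_card]
    · have hlim : Tendsto (fun s : ℝ => s * finrank ℝ (span ℝ (v '' (J : Set ι)))) (𝓝[<] d)
          (𝓝 (d * finrank ℝ (span ℝ (v '' (J : Set ι))))) :=
        (tendsto_id.mul_const _).mono_left nhdsWithin_le_nhds
      filter_upwards [hlim.eventually_const_lt (h J (Finset.mem_powerset.1 hJ) hJne)] with s hs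
        using hs.le
  obtain ⟨s, hs, hsd, hs₀⟩ := (hev.and (eventually_mem_nhdsWithin.and
    (nhdsWithin_le_nhds (lt_mem_nhds hd)))).exists
  exact ⟨s, hs₀.le, hsd, fun J hJ => hs J (Finset.mem_powerset.2 hJ)⟩

lemma exists_mem_nhds_setLIntegral_feynmanDensity_lt_top [Nonempty κ] {I : Finset ι}
    {x₀ : κ → V} (hI : ∀ i ∈ I, feynmanQuadric (ℓ i) x₀ = 0)
    (h : ∀ J ⊆ I, J.Nonempty →
      2 * J.card < Fintype.card κ * finrank ℝ (span ℝ (ℓ '' (J : Set ι)))) :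
    ∃ U ∈ 𝓝 x₀, ∫⁻ x in U, feynmanDensity ℓ I x ∂Measure.pi (fun _ => μ) < ⊤ := by
  have hd : (0 : ℝ) < Fintype.card κ := by simp [Fintype.card_pos]
  obtain ⟨s, hs₀, hsd, hcard⟩ := exists_lt_forall_card_le_mul_finrank (half_pos hd)
    (v := ℓ) (I := I) fun J hJ hJne => by
      have : (2 * J.card : ℝ) < Fintype.card κ * finrank ℝ (span ℝ (ℓ '' (J : Set ι))) := by
        exact_mod_cast h J hJ hJne
      linarith
  have hℓ (i : ι) (hi : i ∈ I) : ℓ i ≠ 0 := fun h₀ => by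
    have hspan : span ℝ (ℓ '' (({i} : Finset ι) : Set ι)) = ⊥ := by simp [h₀]
    have hlt := h {i} (Finset.singleton_subset_iff.2 hi) (Finset.singleton_nonempty i)
    rw [hspan, finrank_bot] at hlt
    lia
  obtain ⟨U, hU, hUint⟩ := locallyIntegrable_monomialMajorant (κ := κ) μ (ℓ := ℓ) I
    (p := 2 * s / Fintype.card κ) ((div_lt_one hd).2 (by linarith)) x₀
  have hsmall : ∀ᶠ x in 𝓝 x₀, ∀ i ∈ I, feynmanQuadric (ℓ i) x < 1 :=
    (Finset.eventually_all I).2 fun i hi =>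
      (continuous_feynmanQuadric (ℓ i)).tendsto x₀ |>.eventually_lt_const (by simp [hI i hi])
  obtain ⟨O, hO, hOopen, hx₀⟩ := mem_nhds_iff.1 (inter_mem hU hsmall)
  refine ⟨O, hOopen.mem_nhds hx₀, ?_⟩
  calc ∫⁻ x in O, feynmanDensity ℓ I x ∂Measure.pi (fun _ => μ)
      ≤ ∫⁻ x in O, ENNReal.ofReal (monomialMajorant ℓ I (2 * s / Fintype.card κ) x)
          ∂Measure.pi (fun _ => μ) := by
        refine setLIntegral_mono_ae' hOopen.measurableSet ?_
        filter_upwards [ae_forall_ne_zero (κ := κ) μ hℓ] with x hx hxO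
        exact feynmanDensity_le_ofReal_monomialMajorant hs₀ hcard hx fun i hi =>
          ((hO hxO).2 i hi).le
    _ < ⊤ := (hUint.mono_set fun x hx => (hO hx).1).lintegral_lt_top

lemma exists_mem_nhds_setLIntegral_feynmanDensity_univ_lt_top [Fintype ι] [Nonempty κ]
    {x₀ : κ → V}
    (h : ∀ J : Finset ι, J.Nonempty → (∀ i ∈ J, feynmanQuadric (ℓ i) x₀ = 0) →
      2 * J.card < Fintype.card κ * finrank ℝ (span ℝ (ℓ '' (J : Set ι)))) :
    ∃ U ∈ 𝓝 x₀, ∫⁻ x in U, feynmanDensity ℓ Finset.univ x ∂Measure.pi (fun _ => μ) < ⊤ := by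
  classical
  set I : Finset ι := {i | feynmanQuadric (ℓ i) x₀ = 0}
  have hI {i : ι} : i ∈ I ↔ feynmanQuadric (ℓ i) x₀ = 0 := by simp [I]
  have hfin : feynmanDensity ℓ Iᶜ x₀ ≠ ⊤ := fun htop => by
    obtain ⟨i, hi, h₀⟩ := feynmanDensity_eq_top_iff.1 htop
    exact Finset.mem_compl.1 hi (hI.2 h₀)
  simp only [feynmanDensity_univ_eq_mul_compl (I := I)]
  exact exists_mem_nhds_setLIntegral_mul_lt_top
    (exists_mem_nhds_setLIntegral_feynmanDensity_lt_top μ (fun _ => hI.1)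
      fun J hJ hJne => h J hJne fun i hi => hI.1 (hJ hi))
    (continuous_feynmanDensity ℓ Iᶜ).continuousAt hfin

lemma setLIntegral_feynmanDensity_lt_top_of_isCompact [Fintype ι] [Nonempty κ] {K : Set (κ → V)}
    (hK : IsCompact K) (hK₀ : 0 ∉ K)
    (h : ∀ J : Finset ι, J.Nonempty → (⨅ i ∈ J, LinearMap.ker (ℓ i)) ≠ ⊥ →
      2 * J.card < Fintype.card κ * finrank ℝ (span ℝ (ℓ '' (J : Set ι)))) :
    ∫⁻ x in K, feynmanDensity ℓ Finset.univ x ∂Measure.pi (fun _ => μ) < ⊤ := by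
  rw [← withDensity_apply']
  refine hK.measure_lt_top_of_nhdsWithin fun x hx => ?_
  obtain ⟨U, hU, hUfin⟩ := exists_mem_nhds_setLIntegral_feynmanDensity_univ_lt_top μ (ℓ := ℓ)
    (x₀ := x) fun J hJ hJx => h J hJ <| by
      obtain ⟨j, hj⟩ : ∃ j, x j ≠ 0 := Function.ne_iff.1 (ne_of_mem_of_not_mem hx hK₀)
      refine (Submodule.ne_bot_iff _).2 ⟨x j, ?_, hj⟩
      simpa only [Submodule.mem_iInf, LinearMap.mem_ker] using
        fun i hi => feynmanQuadric_eq_zero_iff.1 (hJx i hi) j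
  exact ⟨U, nhdsWithin_le_nhds hU, by rwa [withDensity_apply']⟩

end Convergence

section Divergence

variable [NormedAddCommGroup V] [NormedSpace ℝ V] [FiniteDimensional ℝ V] [MeasurableSpace V]
  [BorelSpace V] (μ : Measure V) [μ.IsAddHaarMeasure] {ℓ : ι → V →ₗ[ℝ] ℝ} {I : Finset ι}
  {x₀ : κ → V} {A : Set (κ → V)}

lemma setLIntegral_feynmanDensity_eq_top_of_finrank_pos [Nonempty κ]
    (hI : ∀ i ∈ I, feynmanQuadric (ℓ i) x₀ = 0)
    (hpos : 0 < finrank ℝ (span ℝ (ℓ '' (I : Set ι))))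
    (hcard : Fintype.card κ * finrank ℝ (span ℝ (ℓ '' (I : Set ι))) ≤ 2 * I.card)
    (hA : A ∈ 𝓝 x₀) :
    ∫⁻ x in A, feynmanDensity ℓ I x ∂Measure.pi (fun _ => μ) = ⊤ := by
  let W : Submodule ℝ (κ → V) := Submodule.pi Set.univ fun _ => ⨅ i ∈ I, LinearMap.ker (ℓ i)
  have hW {x : κ → V} : x ∈ W ↔ ∀ i ∈ I, ∀ j, ℓ i (x j) = 0 := by
    simp only [W, Submodule.mem_pi, Set.mem_univ, true_imp_iff, Submodule.mem_iInf,
      LinearMap.mem_ker]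
    exact ⟨fun h i hi j => h j i hi, fun h j i hi => h i hi j⟩
  obtain ⟨W', hcompl⟩ := W.exists_isCompl
  have hfinrank : finrank ℝ W' = Fintype.card κ * finrank ℝ (span ℝ (ℓ '' (I : Set ι))) := by
    have hsum := finrank_add_eq_of_isCompl hcompl
    rw [finrank_pi_univ_const, finrank_pi_fintype, Finset.sum_const, Finset.card_univ,
      smul_eq_mul, ← finrank_span_image_add_finrank_iInf_ker ℓ I] at hsum
    linarith
  refine setLIntegral_eq_top_of_le_pow_mul_dilation _ hcompl ?_
    (continuous_feynmanDensity ℓ I).measurable (fun _ => feynmanDensity_ne_zero) ?_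
    (hW.2 fun i hi => feynmanQuadric_eq_zero_iff.1 (hI i hi)) hA
  · rw [hfinrank]
    exact (Nat.mul_pos Fintype.card_pos hpos).ne'
  · intro c hc x
    have hscale (i : ι) (hi : i ∈ I) (j : κ) :
        ℓ i (dilationOfIsCompl hcompl c x j) = c * ℓ i (x j) :=
      map_dilationOfIsCompl hcompl (φ := ℓ i ∘ₗ LinearMap.proj j) (fun y hy => hW.1 hy i hi j) c x
    rw [feynmanDensity_eq_ofReal_mul hc.1 hscale, hfinrank]
    exact mul_le_mul_left (ENNReal.ofReal_le_ofReal (pow_le_pow_of_le_one hc.1.le hc.2 hcard)) _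

lemma setLIntegral_feynmanDensity_eq_top [Nonempty κ] (hIne : I.Nonempty)
    (hI : ∀ i ∈ I, feynmanQuadric (ℓ i) x₀ = 0)
    (hcard : Fintype.card κ * finrank ℝ (span ℝ (ℓ '' (I : Set ι))) ≤ 2 * I.card)
    (hA : A ∈ 𝓝 x₀) :
    ∫⁻ x in A, feynmanDensity ℓ I x ∂Measure.pi (fun _ => μ) = ⊤ := by
  rcases Nat.eq_zero_or_pos (finrank ℝ (span ℝ (ℓ '' (I : Set ι)))) with hrank | hrank
  · obtain ⟨i, hi⟩ := hIne
    have hℓi : ℓ i = 0 := by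
      rw [finrank_eq_zero] at hrank
      simpa [hrank] using subset_span (R := ℝ) (Set.mem_image_of_mem ℓ (Finset.mem_coe.2 hi))
    have htop (x : κ → V) : feynmanDensity ℓ I x = ⊤ :=
      feynmanDensity_eq_top_iff.2 ⟨i, hi, by simp [feynmanQuadric_eq_zero_iff, hℓi]⟩
    simp only [htop, setLIntegral_const]
    exact ENNReal.top_mul (Measure.measure_pos_of_mem_nhds _ hA).ne'
  · exact setLIntegral_feynmanDensity_eq_top_of_finrank_pos μ hI hrank hcard hA

lemma setLIntegral_feynmanDensity_univ_eq_top [Fintype ι] [Nonempty κ] (hIne : I.Nonempty)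
    (hI : ∀ i ∈ I, feynmanQuadric (ℓ i) x₀ = 0)
    (hcard : Fintype.card κ * finrank ℝ (span ℝ (ℓ '' (I : Set ι))) ≤ 2 * I.card)
    (hA : A ∈ 𝓝 x₀) :
    ∫⁻ x in A, feynmanDensity ℓ Finset.univ x ∂Measure.pi (fun _ => μ) = ⊤ := by
  classical
  simp only [feynmanDensity_univ_eq_mul_compl (I := I)]
  exact setLIntegral_mul_eq_top_of_forall_mem_nhds
    (fun U hU => setLIntegral_feynmanDensity_eq_top μ hIne hI hcard hU)
    (continuous_feynmanDensity ℓ Iᶜ).continuousAt feynmanDensity_ne_zero hA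

end Divergence

end FeynmanQuadric

theorem feynman_quadrics_convergence_general {V ι κ : Type*} [Fintype ι] [Fintype κ] [Nonempty κ]
    [NormedAddCommGroup V] [NormedSpace ℝ V] [FiniteDimensional ℝ V] [MeasurableSpace V]
    [BorelSpace V] (μ : Measure V) [μ.IsAddHaarMeasure] (ℓ : ι → V →ₗ[ℝ] ℝ) {r R : ℝ}
    (hr : 0 < r) (hrR : r < R) :
    ∫⁻ x in {x : κ → V | r ≤ ‖x‖ ∧ ‖x‖ ≤ R}, feynmanDensity ℓ Finset.univ x
        ∂Measure.pi (fun _ => μ) < ⊤ ↔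
      ∀ I : Finset ι, I.Nonempty → (⨅ i ∈ I, LinearMap.ker (ℓ i)) ≠ ⊥ →
        2 * I.card < Fintype.card κ *
          (finrank ℝ V - finrank ℝ ↥(⨅ i ∈ I, LinearMap.ker (ℓ i))) := by
  have hcodim (I : Finset ι) : finrank ℝ V - finrank ℝ ↥(⨅ i ∈ I, LinearMap.ker (ℓ i)) =
      finrank ℝ (span ℝ (ℓ '' (I : Set ι))) :=
    Nat.sub_eq_of_eq_add (finrank_span_image_add_finrank_iInf_ker ℓ I).symm
  simp only [hcodim]
  refine ⟨fun hfin I hIne hker => ?_, setLIntegral_feynmanDensity_lt_top_of_isCompact μ ?_ ?_⟩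
  · by_contra! hcard
    obtain ⟨v, hv, hv₀⟩ := (Submodule.ne_bot_iff _).1 hker
    simp only [Submodule.mem_iInf, LinearMap.mem_ker] at hv
    have hR : 0 < R := hr.trans hrR
    let x₀ : κ → V := fun _ => ((r + R) / 2 / ‖v‖) • v
    have hx₀ : ‖x₀‖ = (r + R) / 2 := by
      rw [pi_norm_const, norm_smul, Real.norm_of_nonneg (by positivity),
        div_mul_cancel₀ _ (norm_ne_zero_iff.2 hv₀)]
    have hnhds : {x : κ → V | r ≤ ‖x‖ ∧ ‖x‖ ≤ R} ∈ 𝓝 x₀ :=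
      continuous_norm.continuousAt.preimage_mem_nhds (Icc_mem_nhds (by linarith) (by linarith))
    refine hfin.ne (setLIntegral_feynmanDensity_univ_eq_top μ hIne (fun i hi => ?_) hcard hnhds)
    simp [x₀, feynmanQuadric_eq_zero_iff, hv i hi]
  · exact (isCompact_closedBall (0 : κ → V) R).of_isClosed_subset
      (isClosed_Icc.preimage continuous_norm) fun x hx => mem_closedBall_zero_iff.2 hx.2
  · simp [hr]

/-- **Convergence criterion for the period of a family of Feynman quadrics**
(Lemma 4.1 of Bloch–Esnault–Kreimer).  Let `ℓ_1, …, ℓ_{2n}` be linear functionals on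
`ℝ^n` and, for `x = (x⁽¹⁾,…,x⁽⁴⁾) ∈ (ℝ^n)^4 ≅ ℝ^{4n}`, let
`q_i(x) := ∑_{j=1}^4 ℓ_i(x⁽ʲ⁾)²` be the associated Feynman quadrics.  Then
`∫⁻_{1 ≤ ‖x‖ ≤ 2} (∏ᵢ q_i(x))⁻¹ dx < ∞` if and only if every nonempty
`I ⊆ {1,…,2n}` with `⋂_{i∈I} ker ℓ_i ≠ 0` satisfies
`#I < 2·(n − dim ⋂_{i∈I} ker ℓ_i)`. -/
theorem feynman_quadrics_convergence (n : ℕ) (hn : 1 ≤ n)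
    (ℓ : Fin (2 * n) → ((Fin n → ℝ) →ₗ[ℝ] ℝ)) :
    (∫⁻ x in {x : Fin 4 → Fin n → ℝ | 1 ≤ ‖x‖ ∧ ‖x‖ ≤ 2},
        (∏ i : Fin (2 * n), ENNReal.ofReal (∑ j : Fin 4, (ℓ i (x j)) ^ 2))⁻¹) < ⊤ ↔
      ∀ I : Finset (Fin (2 * n)), I.Nonempty →
        (⨅ i ∈ I, LinearMap.ker (ℓ i)) ≠ ⊥ →
        I.card < 2 * (n - Module.finrank ℝ ↥(⨅ i ∈ I, LinearMap.ker (ℓ i))) := by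
  refine (feynman_quadrics_convergence_general (κ := Fin 4) volume ℓ one_pos one_lt_two).trans ?_
  refine forall₃_congr fun I _ _ => ?_
  rw [Fintype.card_fin, finrank_fin_fun]
  lia
end
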